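/- Let (U,ρ) be a complete separable metric space. A measure-valued function ℝ ∋ t ↦ μ[·;t] ∈ M(U) belongs to the space W_1(ℝ, M(U)) of Weyl almost periodic measure-valued functions (with respect to the Lévy–Prokhorov metric) if and only if for every continuous bounded function 𝓕 ∈ C_b(U,ℝ) the real-valued function t ↦ ∫_U 𝓕(x) μ[dx;t] belongs to W_1(ℝ,ℝ). -/

import Mathlib

open MeasureTheory Filter Topology TopologicalSpace
open scoped ENNReal Pointwise

noncomputable section

/-- The truncated ("bounded") distance `ρ'(x,y) = min {1, ρ(x,y)}` on a metric space. -/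
def bdist {α : Type*} [PseudoMetricSpace α] : α → α → ℝ := fun x y => min 1 (dist x y)

/-- The Hausdorff distance `dist_{ρ'}` (corresponding to the truncated metric `ρ'`)
between non-empty closed subsets of a metric space. -/
def clDist {α : Type*} [MetricSpace α] : Closeds α → Closeds α → ℝ :=
  fun A B => (min 1 (EMetric.hausdorffEdist (A : Set α) (B : Set α))).toReal

/-- The Hausdorff distance `dist_ρ` between (non-empty closed bounded) subsets. -/
def clbDist {α : Type*} [MetricSpace α] : Closeds α → Closeds α → ℝ :=
  fun A B => Metric.hausdorffDist (A : Set α) (B : Set α)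

/-- `D^{(d)}_{p,l}(f,g) = ( sup_ξ (1/l) ∫_ξ^{ξ+l} d(f t, g t)^p dt )^{1/p}`,
valued in `ℝ≥0∞`. -/
def weylD {α : Type*} (d : α → α → ℝ) (p l : ℝ) (f g : ℝ → α) : ℝ≥0∞ :=
  (⨆ ξ : ℝ, ENNReal.ofReal (1 / l) *
      ∫⁻ t in Set.Icc ξ (ξ + l), ENNReal.ofReal (d (f t) (g t) ^ p)) ^ (1 / p)

/-- The Weyl semimetric `D^{(d)}_p(f,g) = lim_{l → +∞} D^{(d)}_{p,l}(f,g)`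
(the limit exists; it is formalized here as a `limsup`). -/
def weylDinf {α : Type*} (d : α → α → ℝ) (p : ℝ) (f g : ℝ → α) : ℝ≥0∞ :=
  Filter.limsup (fun l => weylD d p l f g) Filter.atTop

/-- Membership in `M_p(ℝ, α)`: `f` is (strongly) measurable and
`sup_ξ ∫_ξ^{ξ+1} d(f t, x₀)^p dt < +∞`. -/
def MemMp {α : Type*} [TopologicalSpace α] (d : α → α → ℝ) (p : ℝ) (x₀ : α)
    (f : ℝ → α) : Prop :=
  AEStronglyMeasurable f MeasureTheory.volume ∧
  ∃ C : ℝ, ∀ ξ : ℝ,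
    (∫⁻ t in Set.Icc ξ (ξ + 1), ENNReal.ofReal (d (f t) x₀ ^ p)) ≤ ENNReal.ofReal C

/-- A set `T ⊆ ℝ` is relatively dense. -/
def RelDense (T : Set ℝ) : Prop := ∃ a > 0, ∀ ξ : ℝ, (Set.Icc ξ (ξ + a) ∩ T).Nonempty

/-- The set of `(ε, D^{(d)}_{p,l})`-almost periods of `f`. -/
def APeriodsL {α : Type*} (d : α → α → ℝ) (p l ε : ℝ) (f : ℝ → α) : Set ℝ :=
  {τ | weylD d p l f (fun t => f (t + τ)) < ENNReal.ofReal ε}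

/-- The set `P^{(d)}_p(ε; f)` of `(ε, D^{(d)}_p)`-almost periods of `f`. -/
def APeriods {α : Type*} (d : α → α → ℝ) (p ε : ℝ) (f : ℝ → α) : Set ℝ :=
  {τ | weylDinf d p f (fun t => f (t + τ)) < ENNReal.ofReal ε}

/-- Membership in the space `W_p(ℝ, α)` of Weyl almost periodic functions of order `p`
w.r.t. the distance `d` (with distinguished point `x₀`). -/
def MemWp {α : Type*} [TopologicalSpace α] (d : α → α → ℝ) (p : ℝ) (x₀ : α)
    (f : ℝ → α) : Prop :=
  MemMp d p x₀ f ∧ ∀ ε > 0, ∃ l > 0, RelDense (APeriodsL d p l ε f)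

/-- The module `Mod f`: the additive group of all `λ ∈ ℝ` such that `e^{iλτ_j} → 1`
for every `f`-returning sequence `{τ_j}` (a sequence with `D^{(d)}_1(f, f(·+τ_j)) → 0`,
where `d` is the relevant bounded distance). -/
def WMod {α : Type*} (d : α → α → ℝ) (f : ℝ → α) : Set ℝ :=
  {lam : ℝ | ∀ τ : ℕ → ℝ,
    Tendsto (fun j => weylDinf d 1 f (fun t => f (t + τ j))) atTop (nhds 0) →
    Tendsto (fun j => Complex.exp (Complex.I * ((lam * τ j : ℝ) : ℂ))) atTop (nhds 1)}

/-- `κ_W(T) = lim_{l → +∞} sup_ξ (1/l) meas([ξ, ξ+l] ∩ T)` (formalized as a `limsup`). -/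
def kappaW (T : Set ℝ) : ℝ≥0∞ :=
  Filter.limsup (fun l : ℝ => ⨆ ξ : ℝ,
    ENNReal.ofReal (1 / l) * MeasureTheory.volume (Set.Icc ξ (ξ + l) ∩ T)) Filter.atTop

/-- Membership in `M*_p(ℝ, α)`. -/
def MemMpStar {α : Type*} [TopologicalSpace α] (d : α → α → ℝ) (p : ℝ) (x₀ : α)
    (f : ℝ → α) : Prop :=
  MemMp d p x₀ f ∧
  ∀ ε > 0, ∃ δ > 0, ∀ T : Set ℝ, MeasurableSet T → kappaW T < ENNReal.ofReal δ →
    Filter.limsup (fun l : ℝ => ⨆ ξ : ℝ, ENNReal.ofReal (1 / l) *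
        ∫⁻ t in Set.Icc ξ (ξ + l) ∩ T, ENNReal.ofReal (d (f t) x₀ ^ p)) Filter.atTop
      < ENNReal.ofReal ε

/-- Distance from a point to a set w.r.t. the distance `d`, valued in `ℝ≥0∞`
(`∞` for the empty set). -/
def dInfDist {α : Type*} (d : α → α → ℝ) (x : α) (K : Set α) : ℝ≥0∞ :=
  ⨅ y ∈ K, ENNReal.ofReal (d x y)

/-- Membership in `W̃_p(ℝ, α)`: conditions 1) (relatively dense sets of
`(ε, D^{(d)}_p)`-almost periods) and 2) (approximate compactness of values). -/
def MemWpTilde {α : Type*} [TopologicalSpace α] (d : α → α → ℝ) (p : ℝ) (x₀ : α)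
    (f : ℝ → α) : Prop :=
  MemMp d p x₀ f ∧
  (∀ ε > 0, RelDense (APeriods d p ε f)) ∧
  (∀ ε > 0, ∀ δ > 0, ∃ K : Set α, IsCompact K ∧
      kappaW {t | ENNReal.ofReal ε ≤ dInfDist d (f t) K} < ENNReal.ofReal δ)

/-- The support of a Borel measure on a topological space. -/
def measSupport {α : Type*} [TopologicalSpace α] [MeasurableSpace α]
    (μ : Measure α) : Set α :=
  {x | ∀ V : Set α, IsOpen V → x ∈ V → 0 < μ V}

/-- `r_δ(x, μ) = inf { r > 0 : μ[U_r(x)] > δ }`. -/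
def rdelta {α : Type*} [PseudoMetricSpace α] [MeasurableSpace α]
    (x : α) (μ : Measure α) (δ : ℝ) : ℝ :=
  sInf {r : ℝ | 0 < r ∧ ENNReal.ofReal δ < μ (Metric.ball x r)}

/-- The Lévy–Prokhorov distance on Borel probability measures. -/
def lpDist {α : Type*} [MeasurableSpace α] [PseudoEMetricSpace α] :
    ProbabilityMeasure α → ProbabilityMeasure α → ℝ :=
  fun μ ν => MeasureTheory.levyProkhorovDist (μ : Measure α) (ν : Measure α)

end

/-! A Weyl almost periodic function is controlled, up to a small error in mean, by its values on one
fixed window, hence by finitely many small balls. In a complete space this makes its range compact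
enough in mean for composition with a bounded continuous function to preserve almost periodicity;
as the Lévy–Prokhorov metric is complete, this applies to `ν ↦ ∫ 𝓕 dν`.

Conversely, let `(p_j)` be a partition of unity into functions with supports of diameter below `ε`,
and put `g_j(t) = ∫ p_j dμ_t`. The Lévy–Prokhorov distance of `μ_t` and `μ_s` is at most `ε` plus
`∑_{j<m} |g_j(t) - g_j(s)|` plus the tail `∑_{j≥m} g_j(t)`. Finitely many of the `g_j` have common
almost periods. The tail is small in mean, uniformly in the window, by a Baire category argument on
the cube of weights `c ∈ [0, 1]^ℕ`: each function `∑ c_j g_j` is the integral of the bounded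
continuous function `∑ c_j p_j`, so its means over windows of length `l` become independent of the
position of the window as `l → ∞`. This is the mechanism by which weak convergence implies norm
convergence in `ℓ¹`. -/

open scoped NNReal

section WindowMean

/-- The window mean `sup_ξ (1/l) ∫_ξ^{ξ+l} h(t) dt` of a nonnegative function. The Weyl semimetric
`weylD dist 1 l f g` is the window mean of `t ↦ edist (f t) (g t)`; taking values in `ℝ≥0∞` makes it
monotone, subadditive and translation invariant without integrability conditions. -/
noncomputable def weylMean (l : ℝ) (h : ℝ → ℝ≥0∞) : ℝ≥0∞ :=
  ⨆ ξ : ℝ, ENNReal.ofReal (1 / l) * ∫⁻ t in Set.Icc ξ (ξ + l), h t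

variable {ι : Type*} {l L : ℝ} {h h₁ h₂ : ℝ → ℝ≥0∞}

theorem weylMean_mono (H : ∀ t, h₁ t ≤ h₂ t) : weylMean l h₁ ≤ weylMean l h₂ := by
  unfold weylMean
  gcongr with ξ t
  exact H t

theorem mul_setLIntegral_le_weylMean (l : ℝ) (h : ℝ → ℝ≥0∞) (ξ : ℝ) :
    ENNReal.ofReal (1 / l) * ∫⁻ t in Set.Icc ξ (ξ + l), h t ≤ weylMean l h :=
  le_iSup (fun ξ : ℝ => ENNReal.ofReal (1 / l) * ∫⁻ t in Set.Icc ξ (ξ + l), h t) ξ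

theorem weylMean_add_le (hh₁ : AEMeasurable h₁ volume) :
    weylMean l (fun t => h₁ t + h₂ t) ≤ weylMean l h₁ + weylMean l h₂ := by
  refine iSup_le fun ξ => ?_
  rw [lintegral_add_left' hh₁.restrict, mul_add]
  exact add_le_add (mul_setLIntegral_le_weylMean l h₁ ξ) (mul_setLIntegral_le_weylMean l h₂ ξ)

theorem weylMean_const (hl : 0 < l) (c : ℝ≥0∞) : weylMean l (fun _ => c) = c := by
  have hinv : ENNReal.ofReal (1 / l) * ENNReal.ofReal l = 1 := by
    rw [← ENNReal.ofReal_mul (by positivity), one_div_mul_cancel hl.ne', ENNReal.ofReal_one]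
  simp only [weylMean, setLIntegral_const, Real.volume_Icc, add_sub_cancel_left, ciSup_const]
  rw [mul_left_comm, hinv, mul_one]

theorem weylMean_const_mul {c : ℝ≥0∞} (hc : c ≠ ∞) :
    weylMean l (fun t => c * h t) = c * weylMean l h := by
  simp only [weylMean, lintegral_const_mul' c _ hc, mul_left_comm _ c, ENNReal.mul_iSup]

theorem weylMean_finset_sum_le (s : Finset ι) {h : ι → ℝ → ℝ≥0∞}
    (hh : ∀ i, AEMeasurable (h i) volume) :
    weylMean l (fun t => ∑ i ∈ s, h i t) ≤ ∑ i ∈ s, weylMean l (h i) := by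
  classical
  induction s using Finset.induction_on with
  | empty => simp [weylMean]
  | insert i s his ih =>
    simp only [Finset.sum_insert his]
    exact (weylMean_add_le (hh i)).trans (by gcongr)

theorem setLIntegral_Icc_comp_add_right (h : ℝ → ℝ≥0∞) (a b τ : ℝ) :
    ∫⁻ t in Set.Icc a b, h (t + τ) = ∫⁻ t in Set.Icc (a + τ) (b + τ), h t := by
  simpa using (measurePreserving_add_right volume τ).setLIntegral_comp_preimage_emb
    (measurableEmbedding_addRight τ) h (Set.Icc (a + τ) (b + τ))

theorem weylMean_comp_add_right (h : ℝ → ℝ≥0∞) (τ : ℝ) :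
    weylMean l (fun t => h (t + τ)) = weylMean l h := by
  simp only [weylMean, setLIntegral_Icc_comp_add_right, add_right_comm _ l]
  exact (Equiv.addRight τ).iSup_comp
    (g := fun ξ => ENNReal.ofReal (1 / l) * ∫⁻ t in Set.Icc ξ (ξ + l), h t)

theorem setLIntegral_le_weylMean (hl : 0 < l) (h : ℝ → ℝ≥0∞) (ξ : ℝ) :
    ∫⁻ t in Set.Icc ξ (ξ + l), h t ≤ ENNReal.ofReal l * weylMean l h := by
  have hinv : ENNReal.ofReal l * ENNReal.ofReal (1 / l) = 1 := by
    rw [← ENNReal.ofReal_mul hl.le, mul_one_div_cancel hl.ne', ENNReal.ofReal_one]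
  calc ∫⁻ t in Set.Icc ξ (ξ + l), h t
      = ENNReal.ofReal l * (ENNReal.ofReal (1 / l) * ∫⁻ t in Set.Icc ξ (ξ + l), h t) := by
        rw [← mul_assoc, hinv, one_mul]
    _ ≤ ENNReal.ofReal l * weylMean l h := by
        gcongr
        exact mul_setLIntegral_le_weylMean l h ξ

theorem setLIntegral_Icc_nat_mul_le {C : ℝ≥0∞} (hl : 0 ≤ l)
    (H : ∀ ξ, ∫⁻ t in Set.Icc ξ (ξ + l), h t ≤ C) (n : ℕ) (ξ : ℝ) :
    ∫⁻ t in Set.Icc ξ (ξ + n * l), h t ≤ n * C := by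
  induction n with
  | zero => simp
  | succ n ih =>
    have hsplit : Set.Icc ξ (ξ + (n + 1 : ℕ) * l) ⊆
        Set.Icc ξ (ξ + n * l) ∪ Set.Icc (ξ + n * l) (ξ + n * l + l) := by
      rw [Set.Icc_union_Icc_eq_Icc (le_add_of_nonneg_right (by positivity))
        (le_add_of_nonneg_right hl)]
      exact Set.Icc_subset_Icc_right (by push_cast; linarith)
    calc ∫⁻ t in Set.Icc ξ (ξ + (n + 1 : ℕ) * l), h t
        ≤ (∫⁻ t in Set.Icc ξ (ξ + n * l), h t)
          + ∫⁻ t in Set.Icc (ξ + n * l) (ξ + n * l + l), h t :=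
          (lintegral_mono_set hsplit).trans (lintegral_union_le _ _ _)
      _ ≤ n * C + C := add_le_add ih (H _)
      _ = (n + 1 : ℕ) * C := by push_cast; ring

theorem weylMean_le_two_mul (hl : 0 < l) (hL : l ≤ L) : weylMean L h ≤ 2 * weylMean l h := by
  have hL0 : 0 < L := hl.trans_le hL
  set n := ⌈L / l⌉₊
  have hLn : L ≤ n * l := (div_le_iff₀ hl).1 (Nat.le_ceil _)
  have hnL : n * l ≤ 2 * L := by
    have := mul_le_mul_of_nonneg_right (Nat.ceil_lt_add_one (div_nonneg hL0.le hl.le)).le hl.le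
    rw [add_mul, div_mul_cancel₀ _ hl.ne'] at this
    linarith
  refine iSup_le fun ξ => ?_
  calc ENNReal.ofReal (1 / L) * ∫⁻ t in Set.Icc ξ (ξ + L), h t
      ≤ ENNReal.ofReal (1 / L) * ∫⁻ t in Set.Icc ξ (ξ + n * l), h t := by gcongr
    _ ≤ ENNReal.ofReal (1 / L) * (n * (ENNReal.ofReal l * weylMean l h)) := by
        gcongr
        exact setLIntegral_Icc_nat_mul_le hl.le (setLIntegral_le_weylMean hl h) n ξ
    _ = ENNReal.ofReal (1 / L * (n * l)) * weylMean l h := by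
        rw [ENNReal.ofReal_mul (by positivity), ENNReal.ofReal_mul (by positivity),
          ENNReal.ofReal_natCast]
        ring
    _ ≤ 2 * weylMean l h := by
        gcongr
        rw [ENNReal.ofReal_le_iff_le_toReal (by simp), ENNReal.toReal_ofNat, one_div_mul_eq_div,
          div_le_iff₀ hL0]
        exact hnL

theorem eventually_weylMean_le {ε : ℝ≥0∞} (hl : 0 < l) (hle : weylMean l h ≤ ε / 2) :
    ∀ᶠ L in atTop, weylMean L h ≤ ε := by
  filter_upwards [eventually_ge_atTop l] with L hL
  grw [weylMean_le_two_mul hl hL, hle, ENNReal.mul_div_cancel two_ne_zero ENNReal.ofNat_ne_top]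

end WindowMean

section WeylAlmostPeriodic

variable {V : Type*} [PseudoMetricSpace V] {v₀ : V} {f : ℝ → V}

theorem RelDense.mono {S T : Set ℝ} (hS : RelDense S) (hST : S ⊆ T) : RelDense T :=
  let ⟨a, ha, H⟩ := hS
  ⟨a, ha, fun ξ => (H ξ).mono (Set.inter_subset_inter_right _ hST)⟩

theorem weylD_one {α : Type*} (d : α → α → ℝ) (l : ℝ) (f g : ℝ → α) :
    weylD d 1 l f g = weylMean l (fun t => ENNReal.ofReal (d (f t) (g t))) := by
  simp only [weylD, weylMean, Real.rpow_one, div_one, ENNReal.rpow_one]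

theorem memMp_dist_one_iff : MemMp dist 1 v₀ f ↔
    AEStronglyMeasurable f volume ∧ weylMean 1 (fun t => edist (f t) v₀) ≠ ∞ := by
  simp only [MemMp, weylMean, div_one, ENNReal.ofReal_one, one_mul, Real.rpow_one, ← edist_dist,
    ← iSup_le_iff]
  exact and_congr_right fun _ => ⟨fun ⟨_, hC⟩ => ne_top_of_le_ne_top ENNReal.ofReal_ne_top hC,
    fun h => ⟨_, (ENNReal.ofReal_toReal h).ge⟩⟩

theorem memWp_dist_one_iff : MemWp dist 1 v₀ f ↔ MemMp dist 1 v₀ f ∧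
    ∀ ε : ℝ≥0∞, ε ≠ 0 →
      ∀ᶠ L in atTop, RelDense {τ | weylMean L (fun t => edist (f t) (f (t + τ))) ≤ ε} := by
  simp only [MemWp, APeriodsL, weylD_one, ← edist_dist]
  refine and_congr_right fun _ => ⟨fun H ε hε => ?_, fun H ε hε => ?_⟩
  · obtain ⟨r, -, hrε⟩ :=
      ENNReal.lt_iff_exists_real_btwn.1 (pos_iff_ne_zero.2 (ENNReal.half_pos hε).ne')
    obtain ⟨l, hl, hT⟩ := H r (ENNReal.ofReal_pos.1 hrε.1)
    filter_upwards [eventually_ge_atTop l] with L hL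
    refine hT.mono fun τ hτ => (weylMean_le_two_mul hl hL).trans ?_
    grw [(hτ.trans hrε.2).le, ENNReal.mul_div_cancel two_ne_zero ENNReal.ofNat_ne_top]
  · obtain ⟨l, hT, hl⟩ := ((H (ENNReal.ofReal (ε / 2)) (ENNReal.ofReal_pos.2 (half_pos hε)).ne').and
      (eventually_gt_atTop 0)).exists
    exact ⟨l, hl, hT.mono fun τ hτ =>
      lt_of_le_of_lt hτ ((ENNReal.ofReal_lt_ofReal_iff hε).2 (half_lt_self hε))⟩

theorem memMp_one_of_forall_le {α : Type*} [TopologicalSpace α] {d : α → α → ℝ} {x₀ : α}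
    {f : ℝ → α} {C : ℝ} (hf : AEStronglyMeasurable f volume) (hC : ∀ t, d (f t) x₀ ≤ C) :
    MemMp d 1 x₀ f := by
  refine ⟨hf, C, fun ξ => ?_⟩
  calc ∫⁻ t in Set.Icc ξ (ξ + 1), ENNReal.ofReal (d (f t) x₀ ^ (1 : ℝ))
      ≤ ∫⁻ _ in Set.Icc ξ (ξ + 1), ENNReal.ofReal C := by
        gcongr with t
        simpa using hC t
    _ = ENNReal.ofReal C := by simp

theorem MemMp.exists_setLIntegral_edist_le (hf : MemMp dist 1 v₀ f) (R : ℝ) :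
    ∃ C ≠ ∞, ∀ ξ, ∫⁻ t in Set.Icc ξ (ξ + R), edist (f t) v₀ ≤ C := by
  obtain ⟨-, hC⟩ := memMp_dist_one_iff.1 hf
  refine ⟨⌈R⌉₊ * weylMean 1 (fun t => edist (f t) v₀), by finiteness, fun ξ => ?_⟩
  calc ∫⁻ t in Set.Icc ξ (ξ + R), edist (f t) v₀
      ≤ ∫⁻ t in Set.Icc ξ (ξ + ⌈R⌉₊ * 1), edist (f t) v₀ := by
        gcongr
        simpa using Nat.le_ceil R
    _ ≤ ⌈R⌉₊ * weylMean 1 (fun t => edist (f t) v₀) :=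
        setLIntegral_Icc_nat_mul_le zero_le_one
          (fun ξ => by simpa using setLIntegral_le_weylMean zero_lt_one _ ξ) _ ξ

end WeylAlmostPeriodic

section Composition

theorem exists_finite_lintegral_infEDist_le {Ω V : Type*} [MeasurableSpace Ω] {ν : Measure Ω}
    [PseudoEMetricSpace V] {f : Ω → V} (hf : AEStronglyMeasurable f ν) {v₀ : V}
    (hint : ∫⁻ t, edist (f t) v₀ ∂ν ≠ ∞) {ε : ℝ≥0∞} (hε : ε ≠ 0) :
    ∃ A : Set V, A.Finite ∧ ∫⁻ t, Metric.infEDist (f t) A ∂ν ≤ ε := by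
  obtain ⟨s, ⟨c, hc, hsc⟩, hfs⟩ := hf.isSeparable_ae_range
  obtain ⟨u, hu⟩ := (hc.insert v₀).exists_eq_range (Set.insert_nonempty _ _)
  set A : ℕ → Set V := fun n => insert v₀ (u '' Set.Iic n)
  have hlim : ∀ᵐ t ∂ν, Tendsto (fun n => Metric.infEDist (f t) (A n)) atTop (𝓝 0) := by
    filter_upwards [hfs] with t ht
    have hmem : f t ∈ closure (Set.range u) := closure_mono (hu ▸ Set.subset_insert _ _) (hsc ht)
    refine ENNReal.tendsto_atTop_zero.2 fun δ hδ => ?_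
    obtain ⟨_, ⟨N, rfl⟩, hN⟩ := EMetric.mem_closure_iff.1 hmem δ hδ
    refine ⟨N, fun n hn => ?_⟩
    have hNA : u N ∈ A n := Set.mem_insert_of_mem _ (Set.mem_image_of_mem u hn)
    exact (Metric.infEDist_le_edist_of_mem hNA).trans hN.le
  have hconv := tendsto_lintegral_of_dominated_convergence' (fun t => edist (f t) v₀)
    (fun n => (Metric.continuous_infEDist.comp_aestronglyMeasurable hf).aemeasurable)
    (fun n => Eventually.of_forall fun t =>
      Metric.infEDist_le_edist_of_mem (Set.mem_insert v₀ _)) hint hlim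
  rw [lintegral_zero] at hconv
  obtain ⟨n, hn⟩ := (hconv.eventually (gt_mem_nhds (pos_iff_ne_zero.2 hε))).exists
  exact ⟨A n, ((Set.finite_Iic n).image u).insert v₀, hn.le⟩

variable {V W : Type*} [PseudoMetricSpace V] [PseudoMetricSpace W] {v₀ : V} {f : ℝ → V}

theorem aemeasurable_edist_translates (hf : AEStronglyMeasurable f volume) (σ τ : ℝ) :
    AEMeasurable (fun t => edist (f (t + σ)) (f (t + τ))) volume :=
  (hf.comp_measurePreserving (measurePreserving_add_right volume σ)).edist
    (hf.comp_measurePreserving (measurePreserving_add_right volume τ))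

theorem MemWp.exists_finite_weylMean_infEDist_le (hf : MemWp dist 1 v₀ f) {ε : ℝ≥0∞}
    (hε : ε ≠ 0) :
    ∃ A : Set V, A.Finite ∧ ∀ᶠ L in atTop, weylMean L (fun t => Metric.infEDist (f t) A) ≤ ε := by
  obtain ⟨hMp, hap⟩ := memWp_dist_one_iff.1 hf
  have hfm := hMp.1
  have hε' : ε / 2 / 2 ≠ 0 := (ENNReal.half_pos (ENNReal.half_pos hε).ne').ne'
  obtain ⟨l, ⟨a, -, hT⟩, hl⟩ := ((hap _ hε').and (eventually_gt_atTop 0)).exists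
  obtain ⟨C, hC, hbound⟩ := hMp.exists_setLIntegral_edist_le (a + l)
  obtain ⟨A, hA, hAint⟩ := exists_finite_lintegral_infEDist_le hfm.restrict
    (ne_top_of_le_ne_top hC (hbound 0)) (ε := ENNReal.ofReal l * (ε / 2 / 2))
    (mul_ne_zero (ENNReal.ofReal_pos.2 hl).ne' hε')
  refine ⟨A, hA, eventually_weylMean_le hl (iSup_le fun ξ => ?_)⟩
  -- an almost period carries the window starting at `ξ` into the fixed window `[0, a + l]`
  obtain ⟨τ, ⟨hτξ, hτa⟩, hτ⟩ := hT (-ξ)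
  have hmeas : AEMeasurable (fun t => edist (f t) (f (t + τ))) volume := by
    simpa using aemeasurable_edist_translates hfm 0 τ
  have hsub : Set.Icc (ξ + τ) (ξ + l + τ) ⊆ Set.Icc 0 (0 + (a + l)) :=
    Set.Icc_subset_Icc (by linarith) (by linarith)
  calc ENNReal.ofReal (1 / l) * ∫⁻ t in Set.Icc ξ (ξ + l), Metric.infEDist (f t) A
      ≤ ENNReal.ofReal (1 / l) * ∫⁻ t in Set.Icc ξ (ξ + l),
          (edist (f t) (f (t + τ)) + Metric.infEDist (f (t + τ)) A) := by
        gcongr with t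
        exact Metric.infEDist_le_edist_add_infEDist
    _ = ENNReal.ofReal (1 / l) * (∫⁻ t in Set.Icc ξ (ξ + l), edist (f t) (f (t + τ)))
          + ENNReal.ofReal (1 / l) *
            ∫⁻ t in Set.Icc (ξ + τ) (ξ + l + τ), Metric.infEDist (f t) A := by
        rw [lintegral_add_left' hmeas.restrict, mul_add,
          setLIntegral_Icc_comp_add_right (fun t => Metric.infEDist (f t) A)]
    _ ≤ ε / 2 / 2 + ENNReal.ofReal (1 / l) * (ENNReal.ofReal l * (ε / 2 / 2)) := by
        gcongr
        · exact (mul_setLIntegral_le_weylMean l _ ξ).trans hτ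
        · exact (lintegral_mono_set hsub).trans hAint
    _ = ε / 2 := by
        rw [← mul_assoc, ← ENNReal.ofReal_mul (by positivity), one_div_mul_cancel hl.ne',
          ENNReal.ofReal_one, one_mul, ENNReal.add_halves]

theorem exists_dist_lt_of_mem_thickening [CompleteSpace V] {Φ : V → W} (hΦ : Continuous Φ)
    {A : ℕ → Set V} (hA : ∀ j, (A j).Finite) {r : ℕ → ℝ}
    (hr : Tendsto r atTop (𝓝 0)) {ε : ℝ} (hε : 0 < ε) :
    ∃ n, ∀ x y, (∀ j ≤ n, x ∈ Metric.thickening (r j) (A j)) → dist x y < r n →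
      dist (Φ x) (Φ y) < ε := by
  by_contra! H
  choose x y hx hxy hΦxy using H
  have hr' : Tendsto r (hyperfilter ℕ) (𝓝 0) := hr.mono_left Nat.hyperfilter_le_atTop
  have hcauchy : Cauchy (map x (hyperfilter ℕ : Filter ℕ)) := by
    refine Metric.cauchy_iff.2 ⟨inferInstance, fun δ hδ => ?_⟩
    obtain ⟨j, hj⟩ := (hr.eventually (gt_mem_nhds (half_pos hδ))).exists
    have hmem : (⋃ a ∈ A j, Metric.ball a (r j)) ∈ (hyperfilter ℕ).map x := by
      rw [← Metric.thickening_eq_biUnion_ball]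
      exact Nat.hyperfilter_le_atTop (eventually_ge_atTop j |>.mono fun n hn => hx n j hn)
    obtain ⟨a, -, ha⟩ := (Ultrafilter.finite_biUnion_mem_iff (hA j)).1 hmem
    refine ⟨Metric.ball a (r j), ha, fun p hp q hq => ?_⟩
    linarith [dist_triangle_right p q a, Metric.mem_ball.1 hp, Metric.mem_ball.1 hq]
  obtain ⟨z, hxz⟩ := CompleteSpace.complete hcauchy
  have hyz : Tendsto y (hyperfilter ℕ) (𝓝 z) :=
    (tendsto_iff_of_dist (squeeze_zero (fun n => dist_nonneg) (fun n => (hxy n).le) hr')).1 hxz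
  have hlim := ((hΦ.tendsto z).comp hxz).dist ((hΦ.tendsto z).comp hyz)
  rw [dist_self] at hlim
  exact hε.not_ge (ge_of_tendsto hlim (Eventually.of_forall hΦxy))

theorem edist_comp_le_of_forall_thickening {Φ : V → W} {C : ℝ≥0∞}
    (hC : ∀ x y, edist (Φ x) (Φ y) ≤ C) {A : ℕ → Set V} {r : ℕ → ℝ≥0} (hr : ∀ j, 0 < r j) {n : ℕ}
    {ε : ℝ≥0} (H : ∀ x y, (∀ j ≤ n, x ∈ Metric.thickening (r j) (A j)) → dist x y < r n →
      dist (Φ x) (Φ y) < ε) (x y : V) :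
    edist (Φ x) (Φ y) ≤ ε + C * ((r n : ℝ≥0∞)⁻¹ * edist x y +
      ∑ j ∈ Finset.range (n + 1), (r j : ℝ≥0∞)⁻¹ * Metric.infEDist x (A j)) := by
  have hone : ∀ {j : ℕ} {b : ℝ≥0∞}, r j ≤ b → 1 ≤ (r j : ℝ≥0∞)⁻¹ * b := fun {j b} hb => by
    rw [← ENNReal.inv_mul_cancel (ENNReal.coe_pos.2 (hr j)).ne' ENNReal.coe_ne_top]
    gcongr
  rcases le_or_gt (r n : ℝ≥0∞) (edist x y) with hxy | hxy
  · exact le_add_left ((hC x y).trans (le_mul_of_one_le_right' (le_add_right (hone hxy))))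
  by_cases hx : ∀ j ≤ n, x ∈ Metric.thickening (r j) (A j)
  · exact le_add_right (edist_lt_coe.2 (H x y hx (edist_lt_coe.1 hxy))).le
  · push Not at hx
    obtain ⟨j, hjn, hj⟩ := hx
    rw [Metric.mem_thickening_iff_infEDist_lt, ENNReal.ofReal_coe_nnreal, not_lt] at hj
    have hsum := (hone hj).trans (Finset.single_le_sum
      (f := fun j => (r j : ℝ≥0∞)⁻¹ * Metric.infEDist x (A j))
      (fun _ _ => zero_le) (Finset.mem_range_succ_iff.2 hjn))
    exact le_add_left ((hC x y).trans (le_mul_of_one_le_right' (le_add_left hsum)))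

theorem weylMean_inv_mul_le {l : ℝ} {r : ℝ≥0} {c : ℝ≥0∞} {h : ℝ → ℝ≥0∞} (hr : 0 < r)
    (hle : weylMean l h ≤ r * c) : weylMean l (fun t => (r : ℝ≥0∞)⁻¹ * h t) ≤ c := by
  have hr0 : (r : ℝ≥0∞) ≠ 0 := (ENNReal.coe_pos.2 hr).ne'
  rw [weylMean_const_mul (ENNReal.inv_ne_top.2 hr0)]
  grw [hle, ← mul_assoc, ENNReal.inv_mul_cancel hr0 ENNReal.coe_ne_top, one_mul]

theorem weylMean_edist_comp_le (hf : AEStronglyMeasurable f volume) {Φ : V → W} {C : ℝ≥0∞}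
    (hC : C ≠ ∞) {A : ℕ → Set V} {δ : ℕ → ℝ≥0} (hδ : ∀ j, 0 < δ j) {n : ℕ} {η : ℝ≥0}
    (H : ∀ x y, edist (Φ x) (Φ y) ≤ η + C * ((δ n : ℝ≥0∞)⁻¹ * edist x y +
      ∑ j ∈ Finset.range (n + 1), (δ j : ℝ≥0∞)⁻¹ * Metric.infEDist x (A j)))
    (hδη : ∑' j, (δ j : ℝ≥0∞) ≤ η) {L τ : ℝ} (hL : 0 < L)
    (hτ : weylMean L (fun t => edist (f t) (f (t + τ))) ≤ δ n * η)
    (hA : ∀ j ∈ Finset.range (n + 1),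
      weylMean L (fun t => Metric.infEDist (f t) (A j)) ≤ δ j * δ j) :
    weylMean L (fun t => edist (Φ (f t)) (Φ (f (t + τ)))) ≤ η * (1 + C * 2) := by
  have hdist : AEMeasurable (fun t => (δ n : ℝ≥0∞)⁻¹ * edist (f t) (f (t + τ))) volume := by
    simpa using (aemeasurable_edist_translates hf 0 τ).const_mul (δ n : ℝ≥0∞)⁻¹
  have hinf : ∀ j, AEMeasurable (fun t => (δ j : ℝ≥0∞)⁻¹ * Metric.infEDist (f t) (A j)) volume :=
    fun j => (Metric.continuous_infEDist.comp_aestronglyMeasurable hf).aemeasurable.const_mul _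
  have hdist_le := weylMean_inv_mul_le (hδ n) hτ
  have hinf_le : ∑ j ∈ Finset.range (n + 1),
      weylMean L (fun t => (δ j : ℝ≥0∞)⁻¹ * Metric.infEDist (f t) (A j)) ≤ η :=
    (Finset.sum_le_sum fun j hj => weylMean_inv_mul_le (hδ j) (hA j hj)).trans
      ((ENNReal.sum_le_tsum _).trans hδη)
  calc weylMean L (fun t => edist (Φ (f t)) (Φ (f (t + τ))))
      ≤ weylMean L (fun t => η + C * ((δ n : ℝ≥0∞)⁻¹ * edist (f t) (f (t + τ)) +
          ∑ j ∈ Finset.range (n + 1), (δ j : ℝ≥0∞)⁻¹ * Metric.infEDist (f t) (A j))) :=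
        weylMean_mono fun t => H _ _
    _ ≤ η + C * (η + η) := by
        grw [weylMean_add_le aemeasurable_const, weylMean_const hL, weylMean_const_mul hC,
          weylMean_add_le hdist, hdist_le, weylMean_finset_sum_le _ hinf, hinf_le]
    _ = η * (1 + C * 2) := by ring

theorem MemWp.comp_boundedContinuousFunction [CompleteSpace V] (hf : MemWp dist 1 v₀ f)
    (Φ : BoundedContinuousFunction V W) (w₀ : W) : MemWp dist 1 w₀ (fun t => Φ (f t)) := by
  obtain ⟨C, hΦC⟩ := Φ.bounded
  have hC : ∀ x y, edist (Φ x) (Φ y) ≤ ENNReal.ofReal C := fun x y =>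
    edist_dist (Φ x) (Φ y) ▸ ENNReal.ofReal_le_ofReal (hΦC x y)
  obtain ⟨⟨hfm, -⟩, hap⟩ := memWp_dist_one_iff.1 hf
  refine memWp_dist_one_iff.2 ⟨memMp_one_of_forall_le (C := C + dist (Φ v₀) w₀)
    (Φ.continuous.comp_aestronglyMeasurable hfm)
    fun t => (dist_triangle _ (Φ v₀) _).trans (by grw [hΦC]), fun ε hε => ?_⟩
  obtain ⟨η, hη0, hη⟩ := ENNReal.exists_nnreal_pos_mul_lt
    (a := 1 + ENNReal.ofReal C * 2) (by finiteness) hε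
  have hηne : (η : ℝ≥0∞) ≠ 0 := (ENNReal.coe_pos.2 hη0).ne'
  obtain ⟨δ, hδ0, hδη⟩ := ENNReal.exists_pos_sum_of_countable hηne ℕ
  have hδsum : Summable δ := ENNReal.tsum_coe_ne_top_iff_summable.1 hδη.ne_top
  have hδlim : Tendsto (fun j => (δ j : ℝ)) atTop (𝓝 0) :=
    (NNReal.summable_coe.2 hδsum).tendsto_atTop_zero
  have hδne : ∀ j, (δ j : ℝ≥0∞) ≠ 0 := fun j => (ENNReal.coe_pos.2 (hδ0 j)).ne'
  choose A hA hAL using fun j =>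
    hf.exists_finite_weylMean_infEDist_le (mul_ne_zero (hδne j) (hδne j))
  obtain ⟨n, hn⟩ := exists_dist_lt_of_mem_thickening Φ.continuous hA hδlim (NNReal.coe_pos.2 hη0)
  filter_upwards [hap (δ n * η) (mul_ne_zero (hδne n) hηne), eventually_gt_atTop 0,
    (eventually_all_finset (Finset.range (n + 1))).2 fun j _ => hAL j] with L hT hL hAL
  exact hT.mono fun τ hτ => (weylMean_edist_comp_le hfm ENNReal.ofReal_ne_top hδ0
    (edist_comp_le_of_forall_thickening hC hδ0 hn) hδη.le hL hτ hAL).trans hη.le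

end Composition

section LevyProkhorovCompleteness

theorem isTightMeasureSet_of_forall_cthickening {U : Type*} [PseudoMetricSpace U] [CompleteSpace U]
    [MeasurableSpace U] {S : Set (Measure U)}
    (hS : ∀ ε : ℝ≥0∞, ε ≠ 0 → ∀ r : ℝ, 0 < r →
      ∃ K, IsCompact K ∧ ∀ ν ∈ S, ν (Metric.cthickening r K)ᶜ ≤ ε) :
    IsTightMeasureSet S := by
  refine isTightMeasureSet_iff_exists_isCompact_measure_compl_le.2 fun ε hε => ?_
  obtain ⟨δ, hδ0, hδε⟩ := ENNReal.exists_pos_sum_of_countable' hε.ne' ℕ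
  choose K hK hKS using fun n : ℕ => hS (δ n) (hδ0 n).ne' (1 / (n + 1)) Nat.one_div_pos_of_nat
  refine ⟨⋂ n : ℕ, Metric.cthickening (1 / (n + 1)) (K n), ?_, fun ν hν => ?_⟩
  · refine TotallyBounded.isCompact_of_isClosed (Metric.totallyBounded_iff.2 fun r hr => ?_)
      (isClosed_iInter fun n => Metric.isClosed_cthickening)
    obtain ⟨n, hn⟩ := exists_nat_one_div_lt (half_pos hr)
    obtain ⟨t, -, ht, hKt⟩ := (hK n).finite_cover_balls (half_pos hr)
    refine ⟨t, ht, fun x hx => ?_⟩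
    have hxn := Metric.cthickening_subset_thickening' (half_pos hr) hn (K n) (Set.mem_iInter.1 hx n)
    obtain ⟨z, hz, hxz⟩ := Metric.mem_thickening_iff.1 hxn
    obtain ⟨y, hy, hzy⟩ := Set.mem_iUnion₂.1 (hKt hz)
    refine Set.mem_iUnion₂.2 ⟨y, hy, Metric.mem_ball.2 ?_⟩
    linarith [Metric.mem_ball.1 hzy, dist_triangle x z y]
  · rw [Set.compl_iInter]
    exact (measure_iUnion_le _).trans ((ENNReal.tsum_le_tsum fun n => hKS n ν hν).trans hδε.le)

variable {U : Type*} [MetricSpace U] [CompleteSpace U] [SeparableSpace U] [MeasurableSpace U]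
  [BorelSpace U]

theorem isTightMeasureSet_range_of_cauchySeq {ν : ℕ → LevyProkhorov (ProbabilityMeasure U)}
    (hν : CauchySeq ν) :
    IsTightMeasureSet (Set.range fun n => ((ν n).toMeasure : Measure U)) := by
  refine isTightMeasureSet_of_forall_cthickening fun ε hε r hr => ?_
  have := UniformSpace.secondCountable_of_separable U
  obtain ⟨c, hc0, hc⟩ := exists_between
    (lt_min (ENNReal.half_pos hε) (ENNReal.ofReal_pos.2 hr))
  obtain ⟨hcε, hcr⟩ := lt_min_iff.1 hc
  obtain ⟨N, hN⟩ := EMetric.cauchySeq_iff'.1 hν c hc0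
  choose K hK hKν using fun n => isTightMeasureSet_iff_exists_isCompact_measure_compl_le.1
    (isTightMeasureSet_singleton (μ := ((ν n).toMeasure : Measure U))) (ε / 2)
    (ENNReal.half_pos hε)
  set K' : Set U := ⋃ n ∈ Set.Iic N, K n
  have hKN : ∀ n ≤ N, ((ν n).toMeasure : Measure U) K'ᶜ ≤ ε / 2 := fun n hn =>
    (measure_mono (Set.compl_subset_compl.2 (Set.subset_biUnion_of_mem (u := K)
      (Set.mem_Iic.2 hn)))).trans (hKν n _ rfl)
  refine ⟨K', (Set.finite_Iic N).isCompact_biUnion fun n _ => hK n, ?_⟩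
  rintro _ ⟨n, rfl⟩
  rcases le_total n N with hn | hn
  · grw [← Metric.self_subset_cthickening, hKN n hn, ENNReal.half_le_self]
  have hthick : Metric.thickening c.toReal (Metric.cthickening r K')ᶜ ⊆ K'ᶜ := fun x hx hxK => by
    obtain ⟨z, hz, hxz⟩ := Metric.mem_thickening_iff.1 hx
    refine hz (Metric.mem_cthickening_of_dist_le z x r K' hxK ?_)
    exact (dist_comm z x).trans_le (hxz.le.trans (ENNReal.toReal_le_of_le_ofReal hr.le hcr.le))
  calc ((ν n).toMeasure : Measure U) (Metric.cthickening r K')ᶜ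
      ≤ ((ν N).toMeasure : Measure U) (Metric.thickening c.toReal (Metric.cthickening r K')ᶜ) + c :=
        left_measure_le_of_levyProkhorovEDist_lt (hN n hn)
          Metric.isClosed_cthickening.measurableSet.compl
    _ ≤ ε / 2 + ε / 2 := by grw [hthick, hKN N le_rfl, hcε]
    _ = ε := ENNReal.add_halves ε

instance instCompleteSpaceLevyProkhorov : CompleteSpace (LevyProkhorov (ProbabilityMeasure U)) := by
  refine Metric.complete_of_cauchySeq_tendsto fun ν hν => ?_
  have htight := isTightMeasureSet_range_of_cauchySeq hν
  have hcompact := isCompact_closure_of_isTightMeasureSet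
    (S := Set.range fun n => (ν n).toMeasure) (by simpa [Set.range] using htight)
  obtain ⟨κ, -, φ, hφ, hlim⟩ :=
    hcompact.tendsto_subseq fun n => subset_closure (Set.mem_range_self n)
  exact ⟨.ofMeasure κ, tendsto_nhds_of_cauchySeq_of_subseq hν hφ.tendsto_atTop
    ((LevyProkhorov.continuous_ofMeasure_probabilityMeasure.tendsto κ).comp hlim)⟩

end LevyProkhorovCompleteness

section LevyProkhorovTransfer

variable {U : Type*} [MetricSpace U] [SeparableSpace U] [MeasurableSpace U] [BorelSpace U]
  {κ : ProbabilityMeasure U} {μ : ℝ → ProbabilityMeasure U}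

theorem memWp_lpDist_iff : MemWp lpDist 1 κ μ ↔
    MemWp dist 1 (LevyProkhorov.ofMeasure κ) (fun t => LevyProkhorov.ofMeasure (μ t)) := by
  have hmeas : AEStronglyMeasurable μ volume ↔
      AEStronglyMeasurable (fun t => LevyProkhorov.ofMeasure (μ t)) volume :=
    ⟨LevyProkhorov.continuous_ofMeasure_probabilityMeasure.comp_aestronglyMeasurable,
      LevyProkhorov.continuous_toMeasure_probabilityMeasure.comp_aestronglyMeasurable⟩
  simp only [MemWp, MemMp, hmeas]
  rfl

theorem MemWp.integral_boundedContinuousFunction [CompleteSpace U] (hμ : MemWp lpDist 1 κ μ)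
    (𝓕 : BoundedContinuousFunction U ℝ) :
    MemWp dist 1 (0 : ℝ) (fun t => ∫ x, 𝓕 x ∂(μ t : Measure U)) := by
  have hcont : Continuous fun ν : LevyProkhorov (ProbabilityMeasure U) =>
      ∫ x, 𝓕 x ∂(ν.toMeasure : Measure U) :=
    (ProbabilityMeasure.continuous_integral_boundedContinuousFunction 𝓕).comp
      LevyProkhorov.continuous_toMeasure_probabilityMeasure
  exact (memWp_lpDist_iff.1 hμ).comp_boundedContinuousFunction (.ofNormedAddCommGroup _ hcont ‖𝓕‖
    fun ν => 𝓕.norm_integral_le_norm _) 0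

end LevyProkhorovTransfer

section Translation

variable {E : Type*} [NormedAddCommGroup E] {f : ℝ → E}

theorem tendsto_lintegral_edist_translate (hf : Integrable f volume) :
    Tendsto (fun s => ∫⁻ t, edist (f t) (f (t + s))) (𝓝 0) (𝓝 0) := by
  have hfL : MemLp f 1 volume := memLp_one_iff_integrable.2 hf
  have hg : Continuous fun s : ℝ => (⟨(· + s), continuous_add_const s⟩ : C(ℝ, ℝ)) :=
    (ContinuousMap.curry ⟨fun p : ℝ × ℝ => p.2 + p.1, by fun_prop⟩).continuous
  have hcont : Continuous fun s : ℝ => edist (hfL.toLp f) (Lp.compMeasurePreserving (· + s)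
      (measurePreserving_add_right volume s) (hfL.toLp f)) :=
    continuous_const.edist (continuous_const.compMeasurePreservingLp hg
      (measurePreserving_add_right volume) ENNReal.one_ne_top)
  have hedist : ∀ s : ℝ, edist (hfL.toLp f) (Lp.compMeasurePreserving (· + s)
      (measurePreserving_add_right volume s) (hfL.toLp f)) = ∫⁻ t, edist (f t) (f (t + s)) := by
    intro s
    rw [Lp.toLp_compMeasurePreserving, Lp.edist_toLp_toLp, eLpNorm_one_eq_lintegral_enorm]
    simp only [Pi.sub_apply, Function.comp_apply, edist_eq_enorm_sub]
  have hlim := hcont.tendsto 0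
  simp only [hedist] at hlim
  simpa using hlim

theorem tendsto_setLIntegral_edist_translate (hf : LocallyIntegrable f volume) (a b : ℝ) :
    Tendsto (fun s => ∫⁻ t in Set.Icc a b, edist (f t) (f (t + s))) (𝓝 0) (𝓝 0) := by
  have hint : Integrable ((Set.Icc (a - 1) (b + 1)).indicator f) volume :=
    (hf.integrableOn_isCompact isCompact_Icc).integrable_indicator measurableSet_Icc
  refine tendsto_of_tendsto_of_tendsto_of_le_of_le' tendsto_const_nhds
    (tendsto_lintegral_edist_translate hint) (Eventually.of_forall fun _ => zero_le) ?_
  filter_upwards [Metric.closedBall_mem_nhds (0 : ℝ) one_pos] with s hs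
  rw [mem_closedBall_zero_iff, Real.norm_eq_abs, abs_le] at hs
  refine (setLIntegral_mono' measurableSet_Icc fun t ht => ?_).trans
    (setLIntegral_le_lintegral (Set.Icc a b) _)
  have hmem : t ∈ Set.Icc (a - 1) (b + 1) := ⟨by linarith [ht.1], by linarith [ht.2]⟩
  have hmem' : t + s ∈ Set.Icc (a - 1) (b + 1) := ⟨by linarith [ht.1], by linarith [ht.2]⟩
  rw [Set.indicator_of_mem hmem, Set.indicator_of_mem hmem']

theorem MemMp.locallyIntegrable (hf : MemMp dist 1 0 f) : LocallyIntegrable f volume := by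
  obtain ⟨C, hC, hbound⟩ := hf.exists_setLIntegral_edist_le 2
  refine fun x => ⟨Set.Icc (x - 1) (x - 1 + 2), Icc_mem_nhds (by linarith) (by linarith),
    hf.1.restrict, ?_⟩
  simpa only [HasFiniteIntegral, edist_zero_right] using (hbound (x - 1)).trans_lt hC.lt_top

theorem weylMean_edist_translates {V : Type*} [PseudoEMetricSpace V] (f : ℝ → V) (L σ τ : ℝ) :
    weylMean L (fun t => edist (f (t + σ)) (f (t + (σ + τ)))) =
      weylMean L (fun t => edist (f t) (f (t + τ))) := by
  simp only [← add_assoc]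
  exact weylMean_comp_add_right (fun t => edist (f t) (f (t + τ))) σ

theorem MemWp.eventually_weylMean_edist_translate_le (hf : MemWp dist 1 0 f) {ε : ℝ≥0∞}
    (hε : ε ≠ 0) :
    ∀ᶠ L in atTop, ∀ᶠ s in 𝓝 0, weylMean L (fun t => edist (f t) (f (t + s))) ≤ ε := by
  obtain ⟨hMp, hap⟩ := memWp_dist_one_iff.1 hf
  have hε3 : ε / 3 ≠ 0 := (ENNReal.div_pos hε (by simp)).ne'
  filter_upwards [hap _ hε3, eventually_gt_atTop 0] with L ⟨a, _, hT⟩ hL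
  have hsmall : 0 < ENNReal.ofReal L * (ε / 3) :=
    ENNReal.mul_pos (ENNReal.ofReal_pos.2 hL).ne' hε3
  filter_upwards [(tendsto_setLIntegral_edist_translate hMp.locallyIntegrable 0 (a + L)).eventually
    (gt_mem_nhds hsmall)] with s hs
  refine iSup_le fun ξ => ?_
  -- an almost period carries the window starting at `ξ` into the fixed window `[0, a + L]`
  obtain ⟨τ, ⟨hτξ, hτa⟩, hτ : weylMean L _ ≤ _⟩ := hT (-ξ)
  have hmeas := aemeasurable_edist_translates hMp.1
  have hsub : Set.Icc (ξ + τ) (ξ + L + τ) ⊆ Set.Icc 0 (a + L) :=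
    Set.Icc_subset_Icc (by linarith) (by linarith)
  calc ENNReal.ofReal (1 / L) * ∫⁻ t in Set.Icc ξ (ξ + L), edist (f t) (f (t + s))
      ≤ ENNReal.ofReal (1 / L) * ∫⁻ t in Set.Icc ξ (ξ + L), (edist (f t) (f (t + τ)) +
          (edist (f (t + s)) (f (t + (s + τ))) + edist (f (t + τ)) (f (t + τ + s)))) := by
        gcongr with t
        rw [add_right_comm t τ s, add_assoc t s τ, add_comm (edist (f (t + s)) _), ← add_assoc,
          edist_comm (f (t + s))]
        exact edist_triangle4 _ _ _ _
    _ = ENNReal.ofReal (1 / L) * (∫⁻ t in Set.Icc ξ (ξ + L), edist (f t) (f (t + τ)))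
          + (ENNReal.ofReal (1 / L) *
            (∫⁻ t in Set.Icc ξ (ξ + L), edist (f (t + s)) (f (t + (s + τ))))
          + ENNReal.ofReal (1 / L) *
            ∫⁻ t in Set.Icc (ξ + τ) (ξ + L + τ), edist (f t) (f (t + s))) := by
        rw [lintegral_add_left' (by simpa using (hmeas 0 τ).restrict),
          lintegral_add_left' (hmeas s (s + τ)).restrict, mul_add, mul_add,
          setLIntegral_Icc_comp_add_right (fun t => edist (f t) (f (t + s)))]
    _ ≤ ε / 3 + (ε / 3 + ENNReal.ofReal (1 / L) * (ENNReal.ofReal L * (ε / 3))) := by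
        gcongr
        · exact (mul_setLIntegral_le_weylMean L _ ξ).trans hτ
        · exact (mul_setLIntegral_le_weylMean L _ ξ).trans
            ((weylMean_edist_translates f L s τ).trans_le hτ)
        · exact (lintegral_mono_set hsub).trans hs.le
    _ = ε := by
        rw [← mul_assoc, ← ENNReal.ofReal_mul (by positivity), one_div_mul_cancel hL.ne',
          ENNReal.ofReal_one, one_mul, ← add_assoc, ENNReal.add_thirds]

end Translation

section CommonAlmostPeriods

variable {E : Type*} [NormedAddCommGroup E]

theorem relDense_setOf_eq_comp_add {κ : Type*} [Finite κ] (c : ℝ → κ) :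
    RelDense {τ | ∃ σ, c (σ + τ) = c σ} := by
  have hrep : ∀ k : Set.range c, ∃ σ, c σ = k := fun k => k.2
  choose σ hσ using hrep
  obtain ⟨B, hB⟩ := (Set.finite_range fun k => |σ k|).bddAbove
  have hσB : ∀ k, |σ k| ≤ B := fun k => hB ⟨k, rfl⟩
  have hB0 : 0 ≤ B := (abs_nonneg _).trans (hσB ⟨c 0, 0, rfl⟩)
  refine ⟨2 * B + 1, by positivity, fun ξ => ?_⟩
  set k : Set.range c := ⟨c (ξ + B), _, rfl⟩ with hk
  obtain ⟨hl, hu⟩ := abs_le.1 (hσB k)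
  exact ⟨ξ + B - σ k, ⟨by linarith, by linarith⟩, σ k, by rw [add_sub_cancel, hσ, hk]⟩

theorem MemWp.eventually_exists_finite_coloring {f : ℝ → E} (hf : MemWp dist 1 0 f) {ε : ℝ≥0∞}
    (hε : ε ≠ 0) :
    ∀ᶠ L in atTop, ∃ c : ℝ → ℤ, (Set.range c).Finite ∧
      ∀ τ τ', c τ = c τ' → weylMean L (fun t => edist (f (t + τ)) (f (t + τ'))) ≤ ε := by
  have hε3 : ε / 3 ≠ 0 := (ENNReal.div_pos hε (by simp)).ne'
  obtain ⟨hMp, hap⟩ := memWp_dist_one_iff.1 hf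
  filter_upwards [hap _ hε3, hf.eventually_weylMean_edist_translate_le hε3] with L ⟨a, _, hT⟩ hs
  obtain ⟨η, hη, hηs⟩ := Metric.eventually_nhds_iff.1 hs
  choose s hsmem hsper using fun τ : ℝ => hT (-τ)
  refine ⟨fun τ => ⌊(τ + s τ) / η⌋, (Set.finite_Icc (0 : ℤ) ⌊a / η⌋).subset ?_, fun τ τ' hc => ?_⟩
  · rintro _ ⟨τ, rfl⟩
    obtain ⟨hl, hu⟩ := hsmem τ
    exact ⟨Int.floor_nonneg.2 (div_nonneg (by linarith) hη.le),
      Int.floor_le_floor (by gcongr; linarith)⟩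
  have hclose : dist ((τ' + s τ') - (τ + s τ)) 0 < η := by
    have := Int.abs_sub_lt_one_of_floor_eq_floor hc.symm
    rwa [← sub_div, abs_div, abs_of_pos hη, div_lt_one hη, ← Real.norm_eq_abs,
      ← dist_zero_right] at this
  have hmeas := aemeasurable_edist_translates hMp.1
  have hper : ∀ σ, weylMean L (fun t => edist (f (t + σ)) (f (t + (σ + s σ)))) ≤ ε / 3 := fun σ =>
    (weylMean_edist_translates f L σ (s σ)).trans_le (hsper σ)
  have hmid : weylMean L (fun t => edist (f (t + (τ + s τ))) (f (t + (τ' + s τ')))) ≤ ε / 3 := by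
    have := (weylMean_edist_translates f L (τ + s τ) _).trans_le (hηs hclose)
    rwa [add_sub_cancel] at this
  calc weylMean L (fun t => edist (f (t + τ)) (f (t + τ')))
      ≤ weylMean L (fun t => edist (f (t + τ)) (f (t + (τ + s τ))) +
          (edist (f (t + τ')) (f (t + (τ' + s τ'))) +
            edist (f (t + (τ + s τ))) (f (t + (τ' + s τ'))))) := by
        refine weylMean_mono fun t => ?_
        rw [add_comm (edist (f (t + τ')) _), ← add_assoc, edist_comm (f (t + τ'))]
        exact edist_triangle4 _ _ _ _
    _ ≤ ε / 3 + (ε / 3 + ε / 3) := by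
        grw [weylMean_add_le (hmeas _ _), weylMean_add_le (hmeas _ _), hper, hper, hmid]
    _ = ε := by rw [← add_assoc, ENNReal.add_thirds]

theorem MemWp.pi [SecondCountableTopology E] {ι : Type*} [Fintype ι] {f : ι → ℝ → E}
    (hf : ∀ i, MemWp dist 1 0 (f i)) : MemWp dist 1 0 (fun t i => f i t) := by
  borelize E
  have hpi : ∀ x y : ι → E, edist x y ≤ ∑ i, edist (x i) (y i) := fun x y =>
    edist_pi_le_iff.2 fun i => Finset.single_le_sum (f := fun i => edist (x i) (y i))
      (fun _ _ => zero_le) (Finset.mem_univ i)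
  have hMp := fun i => memMp_dist_one_iff.1 (hf i).1
  refine memWp_dist_one_iff.2 ⟨memMp_dist_one_iff.2 ⟨(aemeasurable_pi_lambda _ fun i =>
    (hMp i).1.aemeasurable).aestronglyMeasurable, ?_⟩, fun ε hε => ?_⟩
  · refine ne_top_of_le_ne_top (ENNReal.sum_ne_top.2 fun i _ => (hMp i).2)
      ((weylMean_mono fun t => hpi _ 0).trans (weylMean_finset_sum_le _ fun i => ?_))
    exact (hMp i).1.edist aestronglyMeasurable_const
  · obtain ⟨δ, hδ0, hδε⟩ := ENNReal.exists_nnreal_pos_mul_lt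
      (ENNReal.natCast_ne_top (Fintype.card ι)) hε
    have hcol := fun i => (hf i).eventually_exists_finite_coloring (ENNReal.coe_pos.2 hδ0).ne'
    filter_upwards [eventually_all.2 hcol] with L hL
    choose c hfin hc using hL
    have : ∀ i, Finite (Set.range (c i)) := hfin
    refine (relDense_setOf_eq_comp_add fun τ i => Set.rangeFactorization (c i) τ).mono ?_
    rintro τ ⟨σ, hσ⟩
    have hper : ∀ i, weylMean L (fun t => edist (f i t) (f i (t + τ))) ≤ δ := fun i =>
      (weylMean_edist_translates (f i) L σ τ).ge.trans
        (hc i _ _ (congrArg Subtype.val (congrFun hσ i)).symm)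
    calc weylMean L (fun t => edist (fun i => f i t) (fun i => f i (t + τ)))
        ≤ ∑ i, weylMean L (fun t => edist (f i t) (f i (t + τ))) :=
          (weylMean_mono fun t => hpi _ _).trans (weylMean_finset_sum_le _ fun i => by
            simpa using aemeasurable_edist_translates (hMp i).1 0 τ)
      _ ≤ ∑ _ : ι, (δ : ℝ≥0∞) := Finset.sum_le_sum fun i _ => hper i
      _ ≤ ε := by simpa [mul_comm] using hδε.le

end CommonAlmostPeriods

section UniformMean

variable {E : Type*} [NormedAddCommGroup E] [NormedSpace ℝ E] {f : ℝ → E}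

theorem enorm_intervalIntegral_le {a b : ℝ} (hab : a ≤ b) :
    ‖∫ t in a..b, f t‖ₑ ≤ ∫⁻ t in Set.Icc a b, ‖f t‖ₑ := by
  rw [intervalIntegral.integral_of_le hab]
  exact (enorm_integral_le_lintegral_enorm f).trans (lintegral_mono_set Set.Ioc_subset_Icc_self)

theorem edist_intervalIntegral_translate_le (hf : LocallyIntegrable f volume) {l : ℝ} (hl : 0 < l)
    (ξ τ : ℝ) :
    edist (∫ t in ξ..ξ + l, f t) (∫ t in (ξ + τ)..(ξ + τ + l), f t) ≤
      ENNReal.ofReal l * weylMean l (fun t => edist (f t) (f (t + τ))) := by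
  have hint : ∀ a b, IntervalIntegrable f volume a b := fun a b =>
    (hf.integrableOn_isCompact isCompact_uIcc).intervalIntegrable
  have hint' : IntervalIntegrable (fun t => f (t + τ)) volume ξ (ξ + l) := by
    simpa using (hint (ξ + τ) (ξ + l + τ)).comp_add_right τ
  rw [add_right_comm ξ τ l, ← intervalIntegral.integral_comp_add_right, edist_eq_enorm_sub,
    ← intervalIntegral.integral_sub (hint _ _) hint']
  simp only [edist_eq_enorm_sub]
  exact (enorm_intervalIntegral_le (by linarith)).trans (setLIntegral_le_weylMean hl _ ξ)

theorem MemWp.eventually_edist_intervalIntegral_le (hf : MemWp dist 1 0 f) {ε : ℝ≥0∞}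
    (hε : ε ≠ 0) :
    ∀ᶠ l in atTop, ∀ ξ,
      edist (∫ t in ξ..ξ + l, f t) (∫ t in 0..l, f t) ≤ ENNReal.ofReal l * ε := by
  obtain ⟨hMp, hap⟩ := memWp_dist_one_iff.1 hf
  have hε4 : ε / 2 / 2 ≠ 0 := (ENNReal.half_pos (ENNReal.half_pos hε).ne').ne'
  obtain ⟨l₀, ⟨a, -, hT⟩, hl₀⟩ := ((hap _ hε4).and (eventually_gt_atTop 0)).exists
  obtain ⟨C, hC, hbound⟩ := hMp.exists_setLIntegral_edist_le a
  simp only [edist_zero_right] at hbound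
  have hloc := hMp.locallyIntegrable
  have hint : ∀ a b, IntervalIntegrable f volume a b := fun a b =>
    (hloc.integrableOn_isCompact isCompact_uIcc).intervalIntegrable
  have hlarge : Tendsto (fun l => ENNReal.ofReal l * (ε / 2)) atTop (𝓝 ∞) := by
    simpa [ENNReal.top_mul, hε] using ENNReal.Tendsto.mul_const (b := ε / 2)
      ENNReal.tendsto_ofReal_atTop (Or.inl ENNReal.top_ne_zero)
  filter_upwards [eventually_ge_atTop l₀,
    hlarge.eventually (lt_mem_nhds (by finiteness : C + C < ∞))] with l hl hCl ξ
  have hl0 : 0 < l := hl₀.trans_le hl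
  obtain ⟨τ, ⟨hτl, hτu⟩, hτ : weylMean l₀ _ ≤ _⟩ := hT (-ξ)
  have hshift : edist (∫ t in ξ..ξ + l, f t) (∫ t in (ξ + τ)..(ξ + τ + l), f t) ≤
      ENNReal.ofReal l * (ε / 2) := by
    grw [edist_intervalIntegral_translate_le hloc hl0, weylMean_le_two_mul hl₀ hl, hτ,
      ENNReal.mul_div_cancel two_ne_zero ENNReal.ofNat_ne_top]
  have hshort : ∀ x, ‖∫ t in x..x + (ξ + τ), f t‖ₑ ≤ C := fun x =>
    (enorm_intervalIntegral_le (by linarith)).trans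
      ((lintegral_mono_set (Set.Icc_subset_Icc_right (by linarith))).trans (hbound x))
  have hends : edist (∫ t in (ξ + τ)..(ξ + τ + l), f t) (∫ t in 0..l, f t) ≤ C + C := by
    rw [edist_eq_enorm_sub,
      intervalIntegral.integral_interval_sub_interval_comm' (hint _ _) (hint _ _) (hint _ _)]
    refine enorm_sub_le.trans (add_le_add ?_ ?_)
    · simpa only [add_comm l] using hshort l
    · simpa using hshort 0
  calc edist (∫ t in ξ..ξ + l, f t) (∫ t in 0..l, f t)
      ≤ ENNReal.ofReal l * (ε / 2) + (C + C) := (edist_triangle _ _ _).trans (by gcongr)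
    _ ≤ ENNReal.ofReal l * (ε / 2) + ENNReal.ofReal l * (ε / 2) := by gcongr
    _ = ENNReal.ofReal l * ε := by rw [← mul_add, ENNReal.add_halves]

end UniformMean

section SchurProperty

theorem norm_unitInterval_mul_le (c : unitInterval) (x : ℝ) : ‖(c : ℝ) * x‖ ≤ |x| := by
  rw [norm_mul, Real.norm_of_nonneg c.2.1]
  exact mul_le_of_le_one_left (abs_nonneg x) c.2.2

theorem tsum_ite_lt_sub_tsum_ite_lt {a : ℕ → ℝ} (ha : Summable fun j => |a j|)
    (c : ℕ → unitInterval) (m : ℕ) :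
    (∑' j, (if j < m then c j else 1 : unitInterval) * a j) -
      ∑' j, (if j < m then c j else 0 : unitInterval) * a j = ∑' j, a (j + m) := by
  have hsum : ∀ w : ℕ → unitInterval, Summable fun j => (w j : ℝ) * a j := fun w =>
    ha.of_norm_bounded fun j => norm_unitInterval_mul_le (w j) (a j)
  rw [← (hsum _).tsum_sub (hsum _),
    ← ((hsum fun j => if j < m then c j else 1).sub
      (hsum fun j => if j < m then c j else 0)).sum_add_tsum_nat_add m,
    Finset.sum_eq_zero fun j hj => by simp [Finset.mem_range.1 hj], zero_add]
  simp

theorem exists_forall_tsum_nat_add_le {ι : Type*} {a : ℕ → ι → ℕ → ℝ} {δ : ℕ → ℝ} (i₀ : ι)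
    (ha : ∀ n i, Summable fun j => |a n i j|) (hδ : ∀ n, 0 < δ n)
    (H : ∀ c : ℕ → unitInterval, ∃ n, ∀ i,
      |∑' j, c j * a n i j - ∑' j, c j * a n i₀ j| ≤ δ n) :
    ∃ n m, ∀ i, ∑' j, a n i (j + m) ≤ 3 * δ n := by
  have hcont : ∀ n i, Continuous fun c : ℕ → unitInterval => ∑' j, c j * a n i j := fun n i =>
    continuous_tsum (fun j => by fun_prop) (ha n i)
      fun j c => norm_unitInterval_mul_le (c j) (a n i j)
  set K : ℕ → Set (ℕ → unitInterval) := fun n =>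
    {c | ∀ i, |∑' j, c j * a n i j - ∑' j, c j * a n i₀ j| ≤ δ n} with hK
  have hKclosed : ∀ n, IsClosed (K n) := fun n => by
    simp only [hK, Set.ofPred_forall]
    exact isClosed_iInter fun i =>
      isClosed_le ((hcont n i).sub (hcont n i₀)).abs continuous_const
  obtain ⟨n, c, hc⟩ := nonempty_interior_of_iUnion_of_closed hKclosed
    (Set.iUnion_eq_univ_iff.2 H)
  obtain ⟨I, u, hu, hsub⟩ := isOpen_pi_iff.1 isOpen_interior c hc
  obtain ⟨m₀, hm₀⟩ := I.exists_nat_subset_range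
  obtain ⟨m, hm, hmm₀⟩ := (((tendsto_sum_nat_add (a n i₀)).eventually (gt_mem_nhds (hδ n))).and
    (eventually_ge_atTop m₀)).exists
  -- modifying `c` beyond `m` stays inside `K n`
  have hmem : ∀ b : unitInterval, (fun j => if j < m then c j else b) ∈ K n := fun b => by
    refine interior_subset (hsub fun j hj => ?_)
    rw [if_pos ((Finset.mem_range.1 (hm₀ hj)).trans_le hmm₀)]
    exact (hu j hj).2
  refine ⟨n, m, fun i => ?_⟩
  have hone := abs_le.1 (hmem 1 i)
  have hzero := abs_le.1 (hmem 0 i)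
  have htail := tsum_ite_lt_sub_tsum_ite_lt (ha n i) c m
  have htail₀ := tsum_ite_lt_sub_tsum_ite_lt (ha n i₀) c m
  linarith [hone.2, hzero.1]

end SchurProperty

section Tail

variable {g : ℕ → ℝ → ℝ}

theorem locallyIntegrable_of_forall_memWp_tsum
    (H : ∀ c : ℕ → unitInterval, MemWp dist 1 0 (fun t => ∑' j, c j * g j t)) (j : ℕ) :
    LocallyIntegrable (g j) volume := by
  convert (H (Pi.single j 1)).1.locallyIntegrable with t
  rw [tsum_eq_single j fun k hk => by simp [hk]]
  simp

theorem hasSum_intervalIntegral_mul (hg0 : ∀ j t, 0 ≤ g j t) (hg : ∀ t, Summable fun j => g j t)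
    (hm : ∀ j, AEStronglyMeasurable (g j) volume)
    (hint : LocallyIntegrable (fun t => ∑' j, g j t) volume) (c : ℕ → unitInterval) (a b : ℝ) :
    HasSum (fun j => c j * ∫ t in a..b, g j t) (∫ t in a..b, ∑' j, c j * g j t) := by
  have hbound : ∀ j t, ‖(c j : ℝ) * g j t‖ ≤ g j t := fun j t => by
    simpa only [abs_of_nonneg (hg0 j t)] using norm_unitInterval_mul_le (c j) (g j t)
  simp only [← intervalIntegral.integral_const_mul]
  exact intervalIntegral.hasSum_integral_of_dominated_convergence (fun j t => g j t)
    (fun j => ((hm j).const_mul _).restrict)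
    (fun j => Eventually.of_forall fun t _ => hbound j t)
    (Eventually.of_forall fun t _ => hg t)
    (hint.integrableOn_isCompact isCompact_uIcc).intervalIntegrable
    (Eventually.of_forall fun t _ => ((hg t).of_norm_bounded fun j => hbound j t).hasSum)

theorem setLIntegral_Icc_ofReal_tsum (hg0 : ∀ j t, 0 ≤ g j t) (hg : ∀ t, Summable fun j => g j t)
    (hint : ∀ j, LocallyIntegrable (g j) volume) {a b : ℝ} (hab : a ≤ b)
    (hs : Summable fun j => ∫ t in a..b, g j t) :
    ∫⁻ t in Set.Icc a b, ENNReal.ofReal (∑' j, g j t) =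
      ENNReal.ofReal (∑' j, ∫ t in a..b, g j t) := by
  have hintegral : ∀ j, ∫⁻ t in Set.Icc a b, ENNReal.ofReal (g j t) =
      ENNReal.ofReal (∫ t in a..b, g j t) := fun j => by
    rw [intervalIntegral.integral_of_le hab, ← integral_Icc_eq_integral_Ioc,
      ofReal_integral_eq_lintegral_ofReal ((hint j).integrableOn_isCompact isCompact_Icc)
        (Eventually.of_forall (hg0 j))]
  calc ∫⁻ t in Set.Icc a b, ENNReal.ofReal (∑' j, g j t)
      = ∫⁻ t in Set.Icc a b, ∑' j, ENNReal.ofReal (g j t) := by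
        simp only [ENNReal.ofReal_tsum_of_nonneg (fun j => hg0 j _) (hg _)]
    _ = ∑' j, ∫⁻ t in Set.Icc a b, ENNReal.ofReal (g j t) :=
        lintegral_tsum fun j => (hint j).aestronglyMeasurable.aemeasurable.ennreal_ofReal.restrict
    _ = ENNReal.ofReal (∑' j, ∫ t in a..b, g j t) := by
        rw [ENNReal.ofReal_tsum_of_nonneg (fun j =>
          intervalIntegral.integral_nonneg hab fun t _ => hg0 j t) hs]
        exact tsum_congr hintegral

theorem exists_forall_tsum_intervalIntegral_nat_add_le
    (H : ∀ c : ℕ → unitInterval, MemWp dist 1 0 (fun t => ∑' j, c j * g j t))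
    (hsum : ∀ (c : ℕ → unitInterval) a b,
      HasSum (fun j => c j * ∫ t in a..b, g j t) (∫ t in a..b, ∑' j, c j * g j t))
    {δ : ℝ} (hδ : 0 < δ) :
    ∃ l > 0, ∃ m, ∀ ξ, ∑' j, ∫ t in ξ..ξ + l, g (j + m) t ≤ l * δ := by
  have huniform : ∀ c : ℕ → unitInterval, ∃ n : ℕ, ∀ ξ,
      |∑' j, c j * (∫ t in ξ..ξ + (n + 1), g j t) - ∑' j, c j * ∫ t in 0..0 + ((n : ℝ) + 1), g j t|
        ≤ (n + 1) * (δ / 3) := fun c => by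
    obtain ⟨n, hn⟩ := ((tendsto_atTop_add_const_right atTop (1 : ℝ)
      tendsto_natCast_atTop_atTop).eventually ((H c).eventually_edist_intervalIntegral_le
        (ε := ENNReal.ofReal (δ / 3)) (by simpa using hδ))).exists
    refine ⟨n, fun ξ => ?_⟩
    simp only [(hsum c _ _).tsum_eq, zero_add, ← Real.dist_eq]
    rw [← ENNReal.ofReal_le_ofReal_iff (by positivity), ← edist_dist,
      ENNReal.ofReal_mul (by positivity)]
    exact hn ξ
  obtain ⟨n, m, hnm⟩ := exists_forall_tsum_nat_add_le (0 : ℝ)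
    (fun n ξ => by simpa using (hsum 1 ξ (ξ + (n + 1))).summable.abs) (fun n => by positivity)
    huniform
  exact ⟨n + 1, by positivity, m, fun ξ => (hnm ξ).trans_eq (by ring)⟩

theorem exists_eventually_weylMean_tsum_nat_add_le (hg0 : ∀ j t, 0 ≤ g j t)
    (hg : ∀ t, Summable fun j => g j t)
    (H : ∀ c : ℕ → unitInterval, MemWp dist 1 0 (fun t => ∑' j, c j * g j t)) {ε : ℝ}
    (hε : 0 < ε) :
    ∃ m, ∀ᶠ L in atTop,
      weylMean L (fun t => ENNReal.ofReal (∑' j, g (j + m) t)) ≤ ENNReal.ofReal ε := by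
  have hloc := locallyIntegrable_of_forall_memWp_tsum H
  have hsum := hasSum_intervalIntegral_mul hg0 hg (fun j => (hloc j).aestronglyMeasurable)
    (by simpa using (H 1).1.locallyIntegrable)
  obtain ⟨l, hl, m, hm⟩ := exists_forall_tsum_intervalIntegral_nat_add_le H hsum (half_pos hε)
  refine ⟨m, eventually_weylMean_le hl (iSup_le fun ξ => ?_)⟩
  have hwindow : Summable fun j => ∫ t in ξ..ξ + l, g j t := by
    simpa using (hsum 1 ξ (ξ + l)).summable
  have htail := setLIntegral_Icc_ofReal_tsum (g := fun j => g (j + m)) (fun j => hg0 _)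
    (fun t => (summable_nat_add_iff m).2 (hg t)) (fun j => hloc _) (le_add_of_nonneg_right hl.le)
    (hwindow.comp_injective (add_left_injective m))
  calc ENNReal.ofReal (1 / l) * ∫⁻ t in Set.Icc ξ (ξ + l), ENNReal.ofReal (∑' j, g (j + m) t)
      = ENNReal.ofReal (1 / l * ∑' j, ∫ t in ξ..ξ + l, g (j + m) t) := by
        rw [htail, ENNReal.ofReal_mul (by positivity)]
    _ ≤ ENNReal.ofReal (1 / l * (l * (ε / 2))) := by gcongr; exact hm ξ
    _ = ENNReal.ofReal ε / 2 := by
      rw [← mul_assoc, one_div_mul_cancel hl.ne', one_mul, ENNReal.ofReal_div_of_pos two_pos,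
        ENNReal.ofReal_ofNat]

end Tail

section PartitionSum

variable {ι X : Type*} [TopologicalSpace X]

theorem hasSum_finsum {g : ι → ℝ} (hg : (Function.support g).Finite) :
    HasSum g (∑ᶠ i, g i) := by
  rw [← tsum_eq_finsum (L := .unconditional ι) hg]
  exact (summable_of_hasFiniteSupport hg).hasSum

theorem hasSum_partitionOfUnity (p : PartitionOfUnity ι X Set.univ) (x : X) :
    HasSum (fun i => p i x) 1 := by
  rw [← p.sum_eq_one (Set.mem_univ x)]
  exact hasSum_finsum (p.locallyFinite.point_finite x)

/-- The members of a partition of unity, as bounded continuous functions. -/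
noncomputable def partitionTerm (p : PartitionOfUnity ι X Set.univ) (i : ι) :
    BoundedContinuousFunction X ℝ :=
  .ofNormedAddCommGroup (p i) (p i).continuous 1 fun x => by
    rw [Real.norm_of_nonneg (p.nonneg i x)]
    exact p.le_one i x

theorem norm_mul_partitionOfUnity_le (p : PartitionOfUnity ι X Set.univ) (c : ι → unitInterval)
    (i : ι) (x : X) : ‖(c i : ℝ) * p i x‖ ≤ p i x := by
  simpa only [abs_of_nonneg (p.nonneg i x)] using norm_unitInterval_mul_le (c i) (p i x)

theorem hasSum_mul_partitionOfUnity (p : PartitionOfUnity ι X Set.univ) (c : ι → unitInterval)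
    (x : X) : HasSum (fun i => (c i : ℝ) * p i x) (∑ᶠ i, c i * p i x) :=
  hasSum_finsum ((p.locallyFinite.point_finite x).subset (Function.support_mul_subset_right _ _))

theorem continuous_finsum_mul_partitionOfUnity (p : PartitionOfUnity ι X Set.univ) (c : ι → ℝ) :
    Continuous fun x => ∑ᶠ i, c i * p i x := by
  simpa only [smul_eq_mul, mul_comm] using
    p.continuous_finsum_smul (g := fun i _ => c i) fun _ _ _ => continuousAt_const

/-- The continuous function `∑ᵢ cᵢ pᵢ` obtained from a partition of unity `p` and weights
`cᵢ ∈ [0, 1]`. -/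
noncomputable def partitionSum (p : PartitionOfUnity ι X Set.univ) (c : ι → unitInterval) :
    BoundedContinuousFunction X ℝ :=
  .ofNormedAddCommGroup (fun x => ∑ᶠ i, (c i : ℝ) * p i x)
    (continuous_finsum_mul_partitionOfUnity p fun i => c i) 1 fun x => by
      rw [← (hasSum_mul_partitionOfUnity p c x).tsum_eq]
      exact tsum_of_norm_bounded (hasSum_partitionOfUnity p x)
        fun i => norm_mul_partitionOfUnity_le p c i x

variable [MeasurableSpace X] [OpensMeasurableSpace X]

theorem hasSum_integral_partitionSum [Countable ι] (p : PartitionOfUnity ι X Set.univ)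
    (c : ι → unitInterval) (ν : Measure X) [IsFiniteMeasure ν] :
    HasSum (fun i => c i * ∫ x, p i x ∂ν) (∫ x, partitionSum p c x ∂ν) := by
  simp only [← integral_const_mul]
  refine hasSum_integral_of_dominated_convergence (fun i x => p i x)
    (fun i => ((p i).continuous.const_mul _).aestronglyMeasurable)
    (fun i => .of_forall (norm_mul_partitionOfUnity_le p c i))
    (.of_forall fun x => (hasSum_partitionOfUnity p x).summable) ?_
    (.of_forall (hasSum_mul_partitionOfUnity p c))
  simp only [(hasSum_partitionOfUnity p _).tsum_eq, integrable_const]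

theorem hasSum_integral_partitionOfUnity [Countable ι] (p : PartitionOfUnity ι X Set.univ)
    (ν : Measure X) [IsProbabilityMeasure ν] : HasSum (fun i => ∫ x, p i x ∂ν) 1 := by
  have hone : ∀ x, partitionSum p 1 x = 1 := fun x => by
    simpa [partitionSum] using p.sum_eq_one (Set.mem_univ x)
  simpa [hone] using hasSum_integral_partitionSum p 1 ν

end PartitionSum

section LevyProkhorovBound

variable {ι U : Type*} [MeasurableSpace U] {f : ι → U → ℝ} {ε : ℝ} {B : Set U} {s : Finset ι}
  {μ ν : Measure U} [IsProbabilityMeasure μ]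

open Classical in
theorem measureReal_le_sum_integral_add (hf : ∀ i, Integrable (f i) μ) (hf0 : ∀ i x, 0 ≤ f i x)
    (hf1 : ∀ x, ∑ i ∈ s, f i x ≤ 1) (hB : MeasurableSet B) :
    μ.real B ≤ ∑ i ∈ s with ∃ y ∈ B, f i y ≠ 0, ∫ x, f i x ∂μ
      + (1 - ∑ i ∈ s, ∫ x, f i x ∂μ) := by
  have hint : ∀ t : Finset ι, Integrable (fun x => ∑ i ∈ t, f i x) μ := fun t =>
    integrable_finsetSum t fun i _ => hf i
  have hrest := (integrable_const (1 : ℝ)).sub (hint s)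
  rw [← integral_indicator_one hB]
  refine (integral_mono ((integrable_const 1).indicator hB)
    ((hint {i ∈ s | ∃ y ∈ B, f i y ≠ 0}).add hrest)
    (Set.indicator_le' (fun x hx => ?_) fun x _ => ?_)).trans_eq ?_
  · have hfilter : ∑ i ∈ s with ∃ y ∈ B, f i y ≠ 0, f i x = ∑ i ∈ s, f i x :=
      Finset.sum_filter_of_ne fun i _ hi => ⟨x, hx, hi⟩
    simp [hfilter]
  · exact add_nonneg (Finset.sum_nonneg fun i _ => hf0 i x) (sub_nonneg.2 (hf1 x))
  · rw [integral_add' (hint _) hrest, integral_sub' (integrable_const 1) (hint s),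
      integral_finsetSum _ fun i _ => hf i, integral_finsetSum _ fun i _ => hf i]
    simp

variable [PseudoMetricSpace U] [OpensMeasurableSpace U]

open Classical in
theorem sum_integral_le_measureReal_thickening (hf : ∀ i, Integrable (f i) μ)
    (hf0 : ∀ i x, 0 ≤ f i x) (hf1 : ∀ x, ∑ i ∈ s, f i x ≤ 1)
    (hε : ∀ i x y, f i x ≠ 0 → f i y ≠ 0 → dist x y < ε) (B : Set U) :
    ∑ i ∈ s with ∃ y ∈ B, f i y ≠ 0, ∫ x, f i x ∂μ ≤ μ.real (Metric.thickening ε B) := by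
  have hB : MeasurableSet (Metric.thickening ε B) := Metric.isOpen_thickening.measurableSet
  rw [← integral_finsetSum _ fun i _ => hf i, ← integral_indicator_one hB]
  refine integral_mono (integrable_finsetSum _ fun i _ => hf i)
    ((integrable_const 1).indicator hB) (Set.le_indicator (fun x _ => ?_) fun x hx => ?_)
  · exact (Finset.sum_le_sum_of_subset_of_nonneg (Finset.filter_subset _ _)
      fun i _ _ => hf0 i x).trans (hf1 x)
  · refine (Finset.sum_eq_zero fun i hi => ?_).le
    obtain ⟨-, y, hy, hiy⟩ := Finset.mem_filter.1 hi
    by_contra hix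
    exact hx (Metric.mem_thickening_iff.2 ⟨y, hy, hε i x y hix hiy⟩)

theorem levyProkhorovDist_le_add_sum_integral [IsProbabilityMeasure ν]
    (hμ : ∀ i, Integrable (f i) μ) (hν : ∀ i, Integrable (f i) ν) (hf0 : ∀ i x, 0 ≤ f i x)
    (hf1 : ∀ x, ∑ i ∈ s, f i x ≤ 1) (hε0 : 0 ≤ ε)
    (hε : ∀ i x y, f i x ≠ 0 → f i y ≠ 0 → dist x y < ε) :
    levyProkhorovDist μ ν ≤
      ε + ∑ i ∈ s, |∫ x, f i x ∂μ - ∫ x, f i x ∂ν| + (1 - ∑ i ∈ s, ∫ x, f i x ∂μ) := by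
  classical
  set S := ∑ i ∈ s, |∫ x, f i x ∂μ - ∫ x, f i x ∂ν|
  have hS0 : 0 ≤ S := Finset.sum_nonneg fun i _ => abs_nonneg _
  have htail : 0 ≤ 1 - ∑ i ∈ s, ∫ x, f i x ∂μ := by
    rw [← integral_finsetSum _ fun i _ => hμ i, sub_nonneg]
    exact (integral_mono (integrable_finsetSum _ fun i _ => hμ i) (integrable_const 1)
      hf1).trans_eq (by simp)
  refine levyProkhorovDist_le_of_forall_le μ ν (by positivity) fun r B hr hB => ?_
  have hr0 : 0 ≤ r := by linarith
  set J := s.filter fun i => ∃ y ∈ B, f i y ≠ 0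
  have hJ : ∑ i ∈ J, ∫ x, f i x ∂μ ≤ ∑ i ∈ J, ∫ x, f i x ∂ν + S := by
    rw [← sub_le_iff_le_add', ← Finset.sum_sub_distrib]
    exact (Finset.sum_le_sum fun i _ => le_abs_self _).trans
      (Finset.sum_le_sum_of_subset_of_nonneg (Finset.filter_subset _ _) fun i _ _ => abs_nonneg _)
  have hreal : μ.real B ≤ ν.real (Metric.thickening r B) + r := by
    linarith [measureReal_le_sum_integral_add hμ hf0 hf1 hB,
      sum_integral_le_measureReal_thickening hν hf0 hf1 hε B,
      measureReal_mono (μ := ν) (Metric.thickening_mono (show ε ≤ r by linarith) B)]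
  rw [← ofReal_measureReal, ← ofReal_measureReal, ← ENNReal.ofReal_add measureReal_nonneg hr0]
  exact ENNReal.ofReal_le_ofReal hreal

end LevyProkhorovBound

section Mesh

variable {U : Type*} [PseudoMetricSpace U] {ε : ℝ}

theorem exists_partitionOfUnity_dist_lt [T2Space U] [SeparableSpace U] [Nonempty U] (hε : 0 < ε) :
    ∃ p : PartitionOfUnity ℕ U Set.univ,
      ∀ j x y, p j x ≠ 0 → p j y ≠ 0 → dist x y < ε := by
  have hcov : Set.univ ⊆ ⋃ j, Metric.ball (denseSeq U j) (ε / 2) := fun x _ =>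
    Set.mem_iUnion.2 ((denseRange_denseSeq U).exists_dist_lt x (half_pos hε))
  obtain ⟨p, hp⟩ := PartitionOfUnity.exists_isSubordinate isClosed_univ _
    (fun _ => Metric.isOpen_ball) hcov
  refine ⟨p, fun j x y hx hy => ?_⟩
  have hx' : dist x (denseSeq U j) < ε / 2 := hp j (subset_closure hx)
  have hy' : dist y (denseSeq U j) < ε / 2 := hp j (subset_closure hy)
  linarith [dist_triangle_right x y (denseSeq U j)]

variable [MeasurableSpace U] [OpensMeasurableSpace U]

theorem lpDist_le_add_tsum_integral {p : PartitionOfUnity ℕ U Set.univ} (hε0 : 0 ≤ ε)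
    (hp : ∀ j x y, p j x ≠ 0 → p j y ≠ 0 → dist x y < ε) (m : ℕ) (μ ν : ProbabilityMeasure U) :
    lpDist μ ν ≤ ε + m * dist (fun j : Fin m => ∫ x, p j x ∂(μ : Measure U))
        (fun j => ∫ x, p j x ∂(ν : Measure U)) + ∑' j, ∫ x, p (j + m) x ∂(μ : Measure U) := by
  have hint : ∀ (κ : ProbabilityMeasure U) j, Integrable (p j) (κ : Measure U) := fun κ j =>
    (partitionTerm p j).integrable _
  have htail : 1 - ∑ j ∈ Finset.range m, ∫ x, p j x ∂(μ : Measure U) =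
      ∑' j, ∫ x, p (j + m) x ∂(μ : Measure U) := by
    have hsum := hasSum_integral_partitionOfUnity p (μ : Measure U)
    rw [← hsum.tsum_eq, ← hsum.summable.sum_add_tsum_nat_add m, add_sub_cancel_left]
  have hhead : ∑ j ∈ Finset.range m, |∫ x, p j x ∂(μ : Measure U) - ∫ x, p j x ∂(ν : Measure U)| ≤
      m * dist (fun j : Fin m => ∫ x, p j x ∂(μ : Measure U))
        (fun j => ∫ x, p j x ∂(ν : Measure U)) := by
    rw [← Fin.sum_univ_eq_sum_range fun j =>
      |∫ x, p j x ∂(μ : Measure U) - ∫ x, p j x ∂(ν : Measure U)|]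
    simpa [Real.dist_eq] using Finset.sum_le_card_nsmul Finset.univ _ _ fun j _ =>
      dist_le_pi_dist (fun j : Fin m => ∫ x, p j x ∂(μ : Measure U))
        (fun j => ∫ x, p j x ∂(ν : Measure U)) j
  unfold lpDist
  grw [levyProkhorovDist_le_add_sum_integral (s := Finset.range m) (hint μ) (hint ν) p.nonneg
    (fun x => sum_le_hasSum _ (fun j _ => p.nonneg j x) (hasSum_partitionOfUnity p x)) hε0 hp,
    hhead, htail]

theorem ofReal_lpDist_le_add_tsum_integral {p : PartitionOfUnity ℕ U Set.univ} (hε0 : 0 ≤ ε)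
    (hp : ∀ j x y, p j x ≠ 0 → p j y ≠ 0 → dist x y < ε) (m : ℕ) (μ ν : ProbabilityMeasure U) :
    ENNReal.ofReal (lpDist μ ν) ≤ ENNReal.ofReal ε
      + m * edist (fun j : Fin m => ∫ x, p j x ∂(μ : Measure U))
          (fun j => ∫ x, p j x ∂(ν : Measure U))
      + ENNReal.ofReal (∑' j, ∫ x, p (j + m) x ∂(μ : Measure U)) := by
  grw [lpDist_le_add_tsum_integral hε0 hp m μ ν, ENNReal.ofReal_add_le, ENNReal.ofReal_add_le,
    ENNReal.ofReal_mul m.cast_nonneg, ENNReal.ofReal_natCast, edist_dist]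

end Mesh

section Criterion

variable {U : Type*} [MeasurableSpace U]

theorem lpDist_le_one [PseudoMetricSpace U] (μ ν : ProbabilityMeasure U) : lpDist μ ν ≤ 1 :=
  ENNReal.toReal_le_of_le_ofReal zero_le_one
    ((levyProkhorovEDist_le_max_measure_univ _ _).trans (by simp))

variable [MetricSpace U] [BorelSpace U] [SeparableSpace U]

theorem nhds_probabilityMeasure_eq_comap (ν : ProbabilityMeasure U) :
    𝓝 ν = comap (lpDist ν) (𝓝 0) := by
  rw [LevyProkhorov.probabilityMeasureHomeomorph.isInducing.nhds_eq_comap, ← nhds_comap_dist,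
    comap_comap]
  congr 1
  exact funext fun κ => levyProkhorovDist_comm _ _

theorem isEmbedding_integral_partitionOfUnity {p : ℕ → PartitionOfUnity ℕ U Set.univ} {r : ℕ → ℝ}
    (hr : Tendsto r atTop (𝓝 0)) (hr0 : ∀ n, 0 ≤ r n)
    (hp : ∀ n j x y, p n j x ≠ 0 → p n j y ≠ 0 → dist x y < r n) :
    IsEmbedding fun (ν : ProbabilityMeasure U) (i : ℕ × ℕ) =>
      ∫ x, p i.1 i.2 x ∂(ν : Measure U) := by
  set φ := fun (ν : ProbabilityMeasure U) (i : ℕ × ℕ) => ∫ x, p i.1 i.2 x ∂(ν : Measure U) with hφ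
  have hcont : Continuous φ := continuous_pi fun i =>
    ProbabilityMeasure.continuous_integral_boundedContinuousFunction (partitionTerm (p i.1) i.2)
  refine IsInducing.isEmbedding (isInducing_iff_nhds.2 fun ν =>
    le_antisymm hcont.continuousAt.tendsto.le_comap ?_)
  rw [nhds_probabilityMeasure_eq_comap, ← tendsto_iff_comap, Metric.tendsto_nhds]
  intro ε hε
  have hε3 : 0 < ε / 3 := by positivity
  obtain ⟨n, hn⟩ := (hr.eventually_lt_const hε3).exists
  obtain ⟨m, hm⟩ :=
    ((tendsto_sum_nat_add fun j => φ ν (n, j)).eventually_lt_const hε3).exists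
  have hvec : Continuous fun v : ℕ × ℕ → ℝ =>
      m * dist (fun j : Fin m => φ ν (n, j)) (fun j => v (n, j)) := by fun_prop
  filter_upwards [(hvec.tendsto' (φ ν) 0 (by simp)).comp tendsto_comap
    |>.eventually_lt_const hε3] with κ hκ
  rw [Real.dist_0_eq_abs, abs_of_nonneg (show 0 ≤ lpDist ν κ from ENNReal.toReal_nonneg)]
  have := lpDist_le_add_tsum_integral (hr0 n) (hp n) m ν κ
  simp only [Function.comp_def, hφ] at hκ hm
  linarith

variable {μ : ℝ → ProbabilityMeasure U}

theorem aestronglyMeasurable_of_forall_integral [Nonempty U]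
    (H : ∀ 𝓕 : BoundedContinuousFunction U ℝ,
      AEStronglyMeasurable (fun t => ∫ x, 𝓕 x ∂(μ t : Measure U)) volume) :
    AEStronglyMeasurable μ volume := by
  choose p hp using fun n : ℕ =>
    exists_partitionOfUnity_dist_lt (U := U) (Nat.one_div_pos_of_nat (α := ℝ) (n := n))
  rw [← (isEmbedding_integral_partitionOfUnity tendsto_one_div_add_atTop_nhds_zero_nat
    (fun n => Nat.one_div_pos_of_nat.le) hp).aestronglyMeasurable_comp_iff]
  exact (aemeasurable_pi_lambda _ fun i : ℕ × ℕ =>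
    (H (partitionTerm (p i.1) i.2)).aemeasurable).aestronglyMeasurable

theorem eventually_relDense_weylMean_lpDist_le [Nonempty U]
    (H : ∀ 𝓕 : BoundedContinuousFunction U ℝ,
      MemWp dist 1 (0 : ℝ) (fun t => ∫ x, 𝓕 x ∂(μ t : Measure U))) {ε : ℝ} (hε : 0 < ε) :
    ∀ᶠ L in atTop, RelDense
      {τ | weylMean L (fun t => ENNReal.ofReal (lpDist (μ t) (μ (t + τ)))) ≤ ENNReal.ofReal ε} := by
  have hε3 : 0 < ε / 3 := by positivity
  obtain ⟨p, hp⟩ := exists_partitionOfUnity_dist_lt (U := U) hε3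
  set g : ℕ → ℝ → ℝ := fun j t => ∫ x, p j x ∂(μ t : Measure U) with hg
  have hsum : ∀ c : ℕ → unitInterval, MemWp dist 1 0 (fun t => ∑' j, c j * g j t) := fun c => by
    simpa only [hg, (hasSum_integral_partitionSum p c _).tsum_eq] using H (partitionSum p c)
  obtain ⟨m, hm⟩ := exists_eventually_weylMean_tsum_nat_add_le
    (fun j t => integral_nonneg (p.nonneg j))
    (fun t => (hasSum_integral_partitionOfUnity p (μ t : Measure U)).summable) hsum hε3
  have hv : MemWp dist 1 0 (fun t (j : Fin m) => g j t) := MemWp.pi fun j => H (partitionTerm p j)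
  obtain ⟨δ, hδ0, hδ⟩ := ENNReal.exists_nnreal_pos_mul_lt (ENNReal.natCast_ne_top m)
    (ENNReal.ofReal_pos.2 hε3).ne'
  filter_upwards [hm, (memWp_dist_one_iff.1 hv).2 δ (ENNReal.coe_pos.2 hδ0).ne',
    eventually_gt_atTop 0] with L htail hvL hL
  refine hvL.mono fun τ (hτ : weylMean L _ ≤ δ) => ?_
  have hmeas : AEMeasurable
      (fun t => m * edist (fun j : Fin m => g j t) (fun j => g j (t + τ))) volume := by
    simpa using (aemeasurable_edist_translates hv.1.1 0 τ).const_mul (m : ℝ≥0∞)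
  calc weylMean L (fun t => ENNReal.ofReal (lpDist (μ t) (μ (t + τ))))
      ≤ weylMean L (fun t => ENNReal.ofReal (ε / 3)
          + m * edist (fun j : Fin m => g j t) (fun j => g j (t + τ))
          + ENNReal.ofReal (∑' j, g (j + m) t)) :=
        weylMean_mono fun t => ofReal_lpDist_le_add_tsum_integral hε3.le hp m _ _
    _ ≤ ENNReal.ofReal (ε / 3) + m * δ + ENNReal.ofReal (ε / 3) := by
        grw [weylMean_add_le (hmeas.const_add _), weylMean_add_le aemeasurable_const,
          weylMean_const hL, weylMean_const_mul (ENNReal.natCast_ne_top m), hτ, htail]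
    _ ≤ ENNReal.ofReal (ε / 3) + ENNReal.ofReal (ε / 3) + ENNReal.ofReal (ε / 3) := by
        grw [mul_comm, hδ]
    _ = ENNReal.ofReal ε := by
        rw [← ENNReal.ofReal_add hε3.le hε3.le, ← ENNReal.ofReal_add (by positivity) hε3.le,
          add_thirds]

theorem memWp_lpDist_of_forall_integral (κ : ProbabilityMeasure U)
    (H : ∀ 𝓕 : BoundedContinuousFunction U ℝ,
      MemWp dist 1 (0 : ℝ) (fun t => ∫ x, 𝓕 x ∂(μ t : Measure U))) : MemWp lpDist 1 κ μ := by
  have : Nonempty U := κ.nonempty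
  have hMp : MemMp lpDist 1 κ μ := memMp_one_of_forall_le
    (aestronglyMeasurable_of_forall_integral fun 𝓕 => (H 𝓕).1.1) fun t => lpDist_le_one _ _
  refine ⟨hMp, fun ε hε => ?_⟩
  obtain ⟨l, hT, hl⟩ := ((eventually_relDense_weylMean_lpDist_le H (half_pos hε)).and
    (eventually_gt_atTop 0)).exists
  refine ⟨l, hl, hT.mono fun τ hτ => ?_⟩
  simp only [APeriodsL, weylD_one]
  exact lt_of_le_of_lt hτ ((ENNReal.ofReal_lt_ofReal_iff hε).2 (half_lt_self hε))

end Criterion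

/-- **Characterization of Weyl a.p. measure-valued functions.**
Let `(U,ρ)` be a complete separable metric space.  A measure-valued function
`ℝ ∋ t ↦ μ[·;t] ∈ 𝓜(U)` belongs to `W₁(ℝ, 𝓜(U))` (w.r.t. the Lévy–Prokhorov metric)
iff `t ↦ ∫_U 𝓕(x) μ[dx;t]` belongs to `W₁(ℝ,ℝ)` for every `𝓕 ∈ C_b(U,ℝ)`. -/
theorem weyl_ap_measure_iff {U : Type*} [MetricSpace U] [CompleteSpace U]
    [TopologicalSpace.SeparableSpace U] [MeasurableSpace U] [BorelSpace U] (x₀ : U)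
    (μ : ℝ → ProbabilityMeasure U) :
    MemWp lpDist 1
      (⟨MeasureTheory.Measure.dirac x₀, inferInstance⟩ : ProbabilityMeasure U) μ ↔
    ∀ 𝓕 : BoundedContinuousFunction U ℝ,
      MemWp dist 1 (0 : ℝ) (fun t => ∫ x, 𝓕 x ∂(μ t : Measure U)) := by
  exact ⟨fun h => h.integral_boundedContinuousFunction, memWp_lpDist_of_forall_integral _⟩
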